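/- Let k be a number field, let k_v be the completion of k at a nonarchimedean place v, and let A be a k-definable subset of k_v^n. Then A is a finite union of finite intersections of simple subsets of k_v^n, where a simple subset is one of the form {x ∈ k_v^n : f(x) = 0} or {x ∈ k_v^n : f(x) ∈ k_v^{×m}} for some f ∈ k[x₁,…,x_n] and m ∈ ℤ_{>0}. -/

import Mathlib

open FirstOrder IsDedekindDomain

/-- A subset of `k_v^n` is *simple* if it is of the form `{x : f(x) = 0}` or
`{x : f(x) ∈ k_v^{×m}}` for some `f ∈ k[x₁,…,x_n]` and `m ∈ ℤ_{>0}`. -/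
def IsSimpleSubset (k : Type*) [Field k] [NumberField k]
    (v : HeightOneSpectrum (NumberField.RingOfIntegers k)) (n : ℕ)
    (B : Set (Fin n → v.adicCompletion k)) : Prop :=
  (∃ f : MvPolynomial (Fin n) k,
      B = {x : Fin n → v.adicCompletion k | MvPolynomial.aeval x f = 0}) ∨
  (∃ (f : MvPolynomial (Fin n) k) (m : ℕ), 0 < m ∧
      B = {x : Fin n → v.adicCompletion k |
        ∃ b : v.adicCompletion k, b ≠ 0 ∧ b ^ m = MvPolynomial.aeval x f})

open Polynomial

section ValuedTaylor

variable {L Γ : Type*} [Field L] [LinearOrderedCommGroupWithZero Γ] (v : Valuation L Γ)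

theorem valuation_natCast_le_one (n : ℕ) : v (n : L) ≤ 1 := by
  induction n with
  | zero => simp
  | succ n ih => 
    push_cast
    exact (v.map_add _ _).trans (max_le ih (by simp))

theorem valuation_taylor_coeff_le {P : L[X]} {r : L} {ρ B : Γ}
    (hP : ∀ i, v (P.coeff i) * ρ ^ i ≤ B) (hr : v r ≤ ρ) (j : ℕ) :
    v ((taylor r P).coeff j) * ρ ^ j ≤ B := by
  by_cases hρ : ρ = 0 ∧ j ≠ 0
  · simp [hρ.1, hρ.2]
  rw [taylor_coeff, hasseDeriv_apply, sum_def, eval_finsetSum]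
  have key : ∀ i ∈ P.support,
      v (eval r ((monomial (i - j)) ((i.choose j : L) * P.coeff i))) * ρ ^ j ≤ B := by
    intro i hi
    rw [eval_monomial]
    by_cases hij : i < j
    · simp [Nat.choose_eq_zero_of_lt hij]
    push Not at hij
    calc v ((i.choose j : L) * P.coeff i * r ^ (i - j)) * ρ ^ j 
        = v (i.choose j : L) * v (P.coeff i) * v r ^ (i - j) * ρ ^ j := by simp
      _ ≤ 1 * v (P.coeff i) * ρ ^ (i - j) * ρ ^ j := by
        gcongr
        exact valuation_natCast_le_one v _
      _ = v (P.coeff i) * ρ ^ i := by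
        rw [one_mul, mul_assoc, ← pow_add, Nat.sub_add_cancel hij]
      _ ≤ B := hP i
  have h0 : (0 : Γ) ≤ B := zero_le
  rcases eq_or_ne (ρ ^ j) 0 with h | h
  · simp [h]
  · rw [← le_div_iff₀ (zero_lt_iff.2 h)]
    refine v.map_sum_le fun i hi => ?_
    rw [le_div_iff₀ (zero_lt_iff.2 h)]
    exact key i hi

theorem valuation_eval_sub_coeff_zero_le {P : L[X]} {x : L} {ρ B ε : Γ}
    (hP : ∀ i, 1 ≤ i → v (P.coeff i) * ρ ^ i ≤ B) (hx : v x ≤ ρ * ε) (hε : ε ≤ 1) :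
    v (P.eval x - P.coeff 0) ≤ B * ε := by
  have : P.eval x - P.coeff 0 = ∑ i ∈ P.support.erase 0, P.coeff i * x ^ i := by
    rw [eval_eq_sum, sum_def, sub_eq_iff_eq_add]
    by_cases h : 0 ∈ P.support
    · rw [← Finset.sum_erase_add _ _ h]; simp
    · rw [Finset.erase_eq_of_notMem h]
      simpa using h
  rw [this]
  refine v.map_sum_le fun i hi => ?_
  have hi1 : 1 ≤ i := Nat.one_le_iff_ne_zero.2 (Finset.ne_of_mem_erase hi)
  calc v (P.coeff i * x ^ i) = v (P.coeff i) * v x ^ i := by simp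
    _ ≤ v (P.coeff i) * (ρ * ε) ^ i := by gcongr
    _ = v (P.coeff i) * ρ ^ i * ε ^ i := by rw [mul_pow, mul_assoc]
    _ ≤ B * ε ^ 1 := by
      gcongr ?_ * ?_
      · exact hP i hi1
      · exact pow_le_pow_right_of_le_one' hε hi1
    _ = B * ε := by rw [pow_one]

theorem valuation_eval_sub_eval_le {P : L[X]} {x c : L} {ρ B ε : Γ}
    (hP : ∀ i, 1 ≤ i → v ((taylor c P).coeff i) * ρ ^ i ≤ B) (hx : v (x - c) ≤ ρ * ε) (hε : ε ≤ 1) :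
    v (P.eval x - P.eval c) ≤ B * ε := by
  have := valuation_eval_sub_coeff_zero_le v hP hx hε
  rwa [taylor_eval, taylor_coeff_zero, sub_add_cancel] at this

theorem valuation_taylor_coeff_le_of_le {P : L[X]} {c c' : L} {ρ ρ' B : Γ}
    (hP : ∀ i, v ((taylor c P).coeff i) * ρ ^ i ≤ B) (hc : v (c' - c) ≤ ρ) (hρ : ρ' ≤ ρ) (j : ℕ) :
    v ((taylor c' P).coeff j) * ρ' ^ j ≤ B := by
  have := valuation_taylor_coeff_le v hP hc j
  rw [taylor_taylor, sub_add_cancel] at this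
  exact le_trans (by gcongr) this

end ValuedTaylor

/-- A valuation satisfying Hensel's lemma, with a distinguished element `π` of the base field `k`
of valuation less than one whose powers are cofinal among the values of `k`. -/
structure IsHenselianValuation {k L Γ : Type*} [Field k] [Field L]
    [LinearOrderedCommGroupWithZero Γ] (i : k →+* L) (v : Valuation L Γ) (π : k) : Prop where
  hensel : ∀ h : L[X], h.coeff 0 = 1 → h.coeff 1 = 1 → (∀ j, 2 ≤ j → v (h.coeff j) < 1) →
    ∃ z, h.eval z = 0 ∧ v z ≤ 1
  exists_pow_le : ∀ a : k, a ≠ 0 → ∃ e : ℕ, v (i π) ^ e ≤ v (i a)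
  lt_one : v (i π) < 1
  ne_zero : π ≠ 0

/-- The properties of a `p`-adic field `L` (or an ultrapower of one) over a base field `k`,
with uniformizer `π ∈ k` and auxiliary exponent `q` prime to the residue characteristic, that are
needed for the elimination of quantifiers; `P n a` says that `a` is an `n`-th power. -/
structure IsPadicLike {k L Γ : Type*} [Field k] [Field L] [LinearOrderedCommGroupWithZero Γ]
    (i : k →+* L) (v : Valuation L Γ) (π : k) (q : ℕ) (P : ℕ → k → Prop) : Prop
    extends IsHenselianValuation i v π where
  approx : ∀ u, v u ≤ 1 → ∀ N : ℕ, ∃ r : k, v (u - i r) ≤ v (i π) ^ N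
  coset : ∀ n : ℕ, 0 < n → ∀ x : L, x ≠ 0 → ∃ a : k, a ≠ 0 ∧ ∃ y, x = i a * y ^ n
  le_one_iff : ∀ x, v x ≤ 1 ↔ ∃ y, y ^ q = 1 + i π * x ^ q
  pow_iff : ∀ (n : ℕ) (a : k), (∃ y, y ^ n = i a) ↔ P n a
  pos : 0 < q

namespace IsHenselianValuation

variable {k L Γ : Type*} [Field k] [Field L] [LinearOrderedCommGroupWithZero Γ]
    {i : k →+* L} {v : Valuation L Γ} {π : k}

theorem pi_ne_zero (hL : IsHenselianValuation i v π) : v (i π) ≠ 0 := by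
  simpa using hL.ne_zero

theorem pi_pow_pos (hL : IsHenselianValuation i v π) (N : ℕ) : 0 < v (i π) ^ N :=
  zero_lt_iff.2 (pow_ne_zero _ hL.pi_ne_zero)

theorem pi_pow_le_one (hL : IsHenselianValuation i v π) (N : ℕ) : v (i π) ^ N ≤ 1 :=
  pow_le_one' hL.lt_one.le _

theorem pi_pow_lt (hL : IsHenselianValuation i v π) {M N : ℕ} (h : M < N) :
    v (i π) ^ N < v (i π) ^ M :=
  pow_lt_pow_right_of_lt_one₀ (zero_lt_iff.2 hL.pi_ne_zero) hL.lt_one h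

theorem pi_pow_le (hL : IsHenselianValuation i v π) {M N : ℕ} (h : M ≤ N) :
    v (i π) ^ N ≤ v (i π) ^ M :=
  pow_le_pow_right_of_le_one' hL.lt_one.le h

theorem exists_root (hL : IsHenselianValuation i v π) (h : L[X]) (h1 : h.coeff 1 ≠ 0)
    (hj : ∀ j, 2 ≤ j → v (h.coeff j) * v (h.coeff 0) ^ (j - 1) < v (h.coeff 1) ^ j) :
    ∃ z, h.eval z = 0 ∧ v z * v (h.coeff 1) ≤ v (h.coeff 0) := by
  by_cases h0 : h.coeff 0 = 0
  · exact ⟨0, by rw [← coeff_zero_eq_eval_zero, h0], by simp [h0]⟩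
  set a := h.coeff 0 / h.coeff 1
  obtain ⟨z, hz, hz1⟩ := hL.hensel (C (h.coeff 0)⁻¹ * h.comp (C a * X)) 
    (by simp [comp_C_mul_X_coeff, h0])
    (by simp only [coeff_C_mul, comp_C_mul_X_coeff, a]; field_simp) (by
      intro j hj2
      have h0' : v (h.coeff 0) ≠ 0 := by simpa using h0
      have h1' : v (h.coeff 1) ≠ 0 := by simpa using h1
      have e : v ((C (h.coeff 0)⁻¹ * h.comp (C a * X)).coeff j) =
          v (h.coeff j) * v (h.coeff 0) ^ (j - 1) / v (h.coeff 1) ^ j := by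
        obtain ⟨m, rfl⟩ : ∃ m, j = m + 1 := ⟨j - 1, by omega⟩
        simp only [coeff_C_mul, comp_C_mul_X_coeff, a, map_mul, map_inv₀, map_div₀, map_pow,
          Nat.add_sub_cancel, div_pow]
        rw [pow_succ (v (h.coeff 0))]
        field_simp
      rw [e, div_lt_one₀ (zero_lt_iff.2 (pow_ne_zero _ h1'))]
      exact hj j hj2)
  refine ⟨a * z, ?_, ?_⟩
  · have : (h.coeff 0)⁻¹ * h.eval (a * z) = 0 := by simpa [eval_comp] using hz
    simpa [h0] using this
  · have h1' : v (h.coeff 1) ≠ 0 := by simpa using h1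
    calc v (a * z) * v (h.coeff 1) = v (h.coeff 0) * v z := by
          simp only [a, map_mul, map_div₀]; field_simp
      _ ≤ v (h.coeff 0) * 1 := by gcongr
      _ = _ := mul_one _

/-- Hensel's lemma near a point `t`, on the scale `ρ`. -/
theorem exists_root_near (hL : IsHenselianValuation i v π) (g : L[X]) (t : L) {ρ : Γ} {e N : ℕ}
    (hN : 2 * e < N) (hg : g.derivative.eval t ≠ 0) (hρ : ρ ≠ 0)
    (hj : ∀ j, v ((taylor t g).coeff j) * ρ ^ j * v (i π) ^ e ≤ v (g.derivative.eval t) * ρ)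
    (h0 : v (g.eval t) * v (i π) ^ e ≤ v (g.derivative.eval t) * ρ * v (i π) ^ N) :
    ∃ z, g.eval z = 0 ∧ v (z - t) * v (g.derivative.eval t) ≤ v (g.eval t) := by
  have hp := hL.pi_ne_zero
  obtain ⟨z, hz, hz1⟩ := hL.exists_root (taylor t g) (by rwa [taylor_coeff_one]) (by
    intro j hj2
    rw [taylor_coeff_one, taylor_coeff_zero]
    set μ := v (g.derivative.eval t) with hμ
    have hμ0 : μ ≠ 0 := by simpa [hμ] using hg
    set p := v (i π)
    obtain ⟨m, rfl⟩ : ∃ m, j = m + 1 := ⟨j - 1, by omega⟩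
    have hpp : 0 < ρ ^ (m + 1) * p ^ (e * (m + 1)) :=
      zero_lt_iff.2 (mul_ne_zero (pow_ne_zero _ hρ) (pow_ne_zero _ hp))
    rw [← mul_lt_mul_iff_left₀ hpp]
    calc v ((taylor t g).coeff (m + 1)) * v (g.eval t) ^ (m + 1 - 1) *
          (ρ ^ (m + 1) * p ^ (e * (m + 1)))
        = (v ((taylor t g).coeff (m + 1)) * ρ ^ (m + 1) * p ^ e) * (v (g.eval t) * p ^ e) ^ m := by
          rw [Nat.add_sub_cancel, mul_pow, ← pow_mul, mul_add, mul_one, pow_add p]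
          simp only [mul_assoc, mul_left_comm, mul_comm]
      _ ≤ (μ * ρ) * (μ * ρ * p ^ N) ^ m := by
          exact mul_le_mul' (hj _) (pow_le_pow_left' h0 _)
      _ = μ ^ (m + 1) * ρ ^ (m + 1) * p ^ (N * m) := by
          rw [mul_pow, mul_pow, pow_succ, pow_succ, pow_mul]; ac_rfl
      _ < μ ^ (m + 1) * ρ ^ (m + 1) * p ^ (e * (m + 1)) := by
          refine mul_lt_mul_of_pos_left (hL.pi_pow_lt ?_)
            (zero_lt_iff.2 (mul_ne_zero (pow_ne_zero _ hμ0) (pow_ne_zero _ hρ)))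
          have : 1 ≤ m := by omega
          nlinarith
      _ = _ := by ac_rfl)
  rw [taylor_coeff_one, taylor_coeff_zero] at hz1
  exact ⟨z + t, by rwa [taylor_eval] at hz, by rwa [add_sub_cancel_right]⟩

theorem exists_pow_le_natCast [CharZero k] (hL : IsHenselianValuation i v π) {n : ℕ} (hn : n ≠ 0) :
    ∃ e : ℕ, v (i π) ^ e ≤ v (n : L) := by
  obtain ⟨e, he⟩ := hL.exists_pow_le (n : k) (by exact_mod_cast hn)
  exact ⟨e, by simpa using he⟩

theorem exists_eq_pow_of_le (hL : IsHenselianValuation i v π) {n e : ℕ} (hn : 0 < n)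
    (he : v (i π) ^ e ≤ v (n : L)) {u : L} (hu : v (u - 1) ≤ v (i π) ^ (2 * e + 1)) :
    ∃ y, y ≠ 0 ∧ y ^ n = u := by
  have hn0 : v (n : L) ≠ 0 := fun h => by
    rw [h] at he; exact absurd he (not_le.2 (hL.pi_pow_pos e))
  have hd : (X ^ n - C u).derivative.eval 1 = (n : L) := by simp [derivative_X_pow]
  have h0 : (X ^ n - C u).eval 1 = 1 - u := by simp
  obtain ⟨z, hz, -⟩ := hL.exists_root_near (X ^ n - C u) 1 (ρ := 1) (e := e) (N := 2 * e + 1)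
    (by omega) (by rw [hd]; simpa using hn0) one_ne_zero (by
      intro j
      rw [hd, one_pow, mul_one, mul_one]
      refine le_trans ?_ he
      refine mul_le_of_le_one_left' ?_
      rw [map_sub, taylor_C, taylor_X_pow, map_one, ← Nat.cast_one, Nat.cast_one]
      rcases eq_or_ne j 0 with rfl | hj
      · simp only [coeff_sub, coeff_X_add_one_pow, Nat.choose_zero_right, Nat.cast_one,
          coeff_C_zero]
        rw [← neg_sub, Valuation.map_neg]
        exact hu.trans (hL.pi_pow_le_one _)
      · simp only [coeff_sub, coeff_X_add_one_pow, coeff_C_of_ne_zero hj, sub_zero]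
        exact valuation_natCast_le_one v _) (by
      rw [hd, h0, ← neg_sub, Valuation.map_neg, mul_one, mul_comm]
      exact mul_le_mul' he hu)
  refine ⟨z, ?_, ?_⟩
  · rintro rfl
    simp only [eval_sub, eval_pow, eval_X, eval_C, zero_pow hn.ne', zero_sub, neg_eq_zero] at hz
    rw [hz, zero_sub, Valuation.map_neg, map_one] at hu
    exact absurd hu (not_le.2 ((hL.pi_pow_lt (M := 0) (by omega)).trans_eq (pow_zero _)))
  · simpa [sub_eq_zero] using hz

theorem exists_eq_pow [CharZero k] (hL : IsHenselianValuation i v π) {n : ℕ} (hn : 0 < n) :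
    ∃ N : ℕ, ∀ u, v (u - 1) ≤ v (i π) ^ N → ∃ y, y ≠ 0 ∧ y ^ n = u := by
  obtain ⟨e, he⟩ := hL.exists_pow_le_natCast hn.ne'
  exact ⟨2 * e + 1, fun u hu => hL.exists_eq_pow_of_le hn he hu⟩

theorem exists_eq_mul_pow [CharZero k] (hL : IsHenselianValuation i v π) {n : ℕ} (hn : 0 < n) :
    ∃ N : ℕ, ∀ a b, v (a - b) ≤ v b * v (i π) ^ N → ∃ y, y ≠ 0 ∧ a = b * y ^ n := by
  obtain ⟨N, hN⟩ := hL.exists_eq_pow hn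
  refine ⟨N, fun a b hab => ?_⟩
  by_cases hb : b = 0
  · subst hb
    exact ⟨1, one_ne_zero, by simpa [sub_eq_zero] using hab⟩
  have hb' : v b ≠ 0 := by simpa using hb
  obtain ⟨y, hy0, hy⟩ := hN (a / b) (by
    rw [show a / b - 1 = (a - b) / b by field_simp, map_div₀, div_le_iff₀ (zero_lt_iff.2 hb')]
    rwa [mul_comm])
  exact ⟨y, hy0, by rw [hy]; field_simp⟩

end IsHenselianValuation

namespace IsPadicLike

variable {k L Γ : Type*} [Field k] [Field L] [LinearOrderedCommGroupWithZero Γ]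
    {i : k →+* L} {v : Valuation L Γ} {π : k} {q : ℕ} {P : ℕ → k → Prop}

/-- An element of finite valuation is approximated by an element of `k`. -/
theorem exists_approx (hL : IsPadicLike i v π q P) {u : L} {N : ℕ} (hu : v u ≤ 1)
    (hu' : v (i π) ^ N ≤ v u) (M : ℕ) :
    ∃ r : k, r ≠ 0 ∧ v (u - i r) ≤ v u * v (i π) ^ M ∧ v (i r) = v u := by
  obtain ⟨r, hr⟩ := hL.approx u hu (N + (M + 1))
  have h1 : v (u - i r) ≤ v u * v (i π) ^ (M + 1) := by
    refine hr.trans ?_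
    rw [pow_add]; gcongr
  have hu0 : 0 < v u := (hL.pi_pow_pos N).trans_le hu'
  have h2 : v (u - i r) < v u := by
    refine h1.trans_lt ?_
    exact mul_lt_of_lt_one_right hu0 ((hL.pi_pow_lt (M := 0) (by omega)).trans_eq (pow_zero _))
  have h3 : v (i r) = v u := by
    have := Valuation.map_sub_eq_of_lt_left v h2
    simpa using this
  refine ⟨r, ?_, h1.trans ?_, h3⟩
  · rintro rfl
    rw [map_zero, map_zero] at h3
    exact hu0.ne h3
  · gcongr 1
    exact hL.pi_pow_le (by omega)

end IsPadicLike

/-- A polynomial `g` is tame at `t` with respect to the centre `c` if, up to a fixed power of `p`,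
the valuation of `g t` is the maximal valuation of a term of the expansion of `g` around `c`. -/
def IsTame {L Γ : Type*} [Field L] [LinearOrderedCommGroupWithZero Γ] (v : Valuation L Γ) (p : Γ)
    (t c : L) (g : L[X]) : Prop :=
  ∃ e : ℕ, ∀ j, v ((taylor c g).coeff j) * v (t - c) ^ j * p ^ e ≤ v (g.eval t)

namespace IsTame

variable {L Γ : Type*} [Field L] [LinearOrderedCommGroupWithZero Γ] {v : Valuation L Γ} {p : Γ}
  {t c c' : L} {g h : L[X]}

theorem mono (hp : p ≠ 0) (hg : IsTame v p t c g) (hc : v (t - c') ≤ v (t - c)) :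
    IsTame v p t c' g := by
  obtain ⟨e, he⟩ := hg
  have hpe : 0 < p ^ e := zero_lt_iff.2 (pow_ne_zero _ hp)
  refine ⟨e, fun j => ?_⟩
  rw [← le_div_iff₀ hpe]
  refine valuation_taylor_coeff_le_of_le v (c := c) (fun j => ?_) ?_ hc j
  · rw [le_div_iff₀ hpe]; exact he j
  · rw [show c' - c = (t - c) - (t - c') by ring]
    exact (v.map_sub _ _).trans (max_le le_rfl hc)

theorem mul (hg : IsTame v p t c g) (hh : IsTame v p t c h) : IsTame v p t c (g * h) := by
  obtain ⟨e, he⟩ := hg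
  obtain ⟨f, hf⟩ := hh
  refine ⟨e + f, fun j => ?_⟩
  rw [taylor_mul, coeff_mul, eval_mul, map_mul, mul_assoc]
  rcases eq_or_ne (v (t - c) ^ j * p ^ (e + f)) 0 with h0 | h0
  · rw [h0, mul_zero]; exact zero_le
  rw [← le_div_iff₀ (zero_lt_iff.2 h0)]
  refine v.map_sum_le fun x hx => ?_
  rw [le_div_iff₀ (zero_lt_iff.2 h0), ← Finset.HasAntidiagonal.mem_antidiagonal.1 hx]
  calc _ = (v ((taylor c g).coeff x.1) * v (t - c) ^ x.1 * p ^ e) * 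
        (v ((taylor c h).coeff x.2) * v (t - c) ^ x.2 * p ^ f) := by
        rw [map_mul, pow_add, pow_add]; simp only [mul_assoc, mul_left_comm, mul_comm]
    _ ≤ _ := mul_le_mul' (he _) (hf _)

theorem X_sub_C {x : L} (hx : v (t - c) ≤ v (t - x)) : IsTame v p t c (X - C x) := by
  refine ⟨0, fun j => ?_⟩
  rw [map_sub, taylor_X, taylor_C, pow_zero, mul_one, eval_sub, eval_X, eval_C,
    add_sub_assoc, ← C_sub]
  match j with
  | 0 =>
    simp only [coeff_add, coeff_X_zero, coeff_C_zero, zero_add, pow_zero, mul_one]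
    rw [show c - x = (t - x) - (t - c) by ring]
    exact (v.map_sub _ _).trans (max_le le_rfl hx)
  | 1 => simpa [coeff_C] using hx
  | n + 2 => simp [coeff_X]

theorem of_natDegree_eq_zero (hg : g.natDegree = 0) : IsTame v p t c g := by
  obtain ⟨a, rfl⟩ := natDegree_eq_zero.1 hg
  refine ⟨0, fun j => ?_⟩
  rcases j with _ | j <;> simp [taylor_C, coeff_C]

theorem self : IsTame v p t t g := by
  refine ⟨0, fun j => ?_⟩
  rcases j with _ | j <;> simp

end IsTame

namespace IsPadicLike

variable {k L Γ S : Type*} [Field k] [CharZero k] [Field L] [LinearOrderedCommGroupWithZero Γ]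
    {i : k →+* L} {v : Valuation L Γ} {π : k} {q : ℕ} {P : ℕ → k → Prop} [CommRing S] {j : S →+* L}
    {d : ℕ}

theorem exists_root_of_not_isTame (hL : IsPadicLike i v π q P) {g : L[X]} {t c : L}
    (hg' : IsTame v (v (i π)) t c g.derivative) (hg : ¬ IsTame v (v (i π)) t c g) :
    ∃ z, g.eval z = 0 := by
  have hp := hL.pi_ne_zero
  have hδ : v (t - c) ≠ 0 := by
    intro h
    rw [Valuation.zero_iff, sub_eq_zero] at h
    exact hg (h ▸ IsTame.self)
  have hdeg : g.natDegree ≠ 0 := fun h => hg (IsTame.of_natDegree_eq_zero h)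
  set ρ := v (t - c)
  set b : ℕ → Γ := fun l => v ((taylor c g).coeff l) * ρ ^ l with hb
  obtain ⟨m, hm, hmax⟩ := Finset.exists_max_image (Finset.Icc 1 g.natDegree) b
    ⟨1, Finset.mem_Icc.2 ⟨le_rfl, Nat.one_le_iff_ne_zero.2 hdeg⟩⟩
  rw [Finset.mem_Icc] at hm
  have h1 : ∀ l, 1 ≤ l → b l ≤ b m := by
    intro l hl
    by_cases hl' : l ≤ g.natDegree
    · exact hmax l (Finset.mem_Icc.2 ⟨hl, hl'⟩)
    · simp only [hb]
      rw [coeff_eq_zero_of_natDegree_lt (by rw [natDegree_taylor]; omega)]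
      simp
  have h0 : b 0 ≤ b m := by
    by_contra! hlt
    refine hg ⟨0, fun l => ?_⟩
    have h2 : v (g.eval t - g.eval c) ≤ b m * 1 :=
      valuation_eval_sub_eval_le v (ρ := ρ) (fun l hl => h1 l hl) (by rw [mul_one]) le_rfl
    have h3 : v (g.eval c) = b 0 := by simp [hb]
    rw [mul_one] at h2
    have h4 : v (g.eval t) = b 0 := by
      rw [← h3]
      exact Valuation.map_eq_of_sub_lt v (h2.trans_lt (h3 ▸ hlt))
    rw [pow_zero, mul_one, h4]
    rcases Nat.eq_zero_or_pos l with rfl | hl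
    · exact le_rfl
    · exact (h1 l hl).trans hlt.le
  have hall : ∀ l, b l ≤ b m := fun l => by
    rcases Nat.eq_zero_or_pos l with rfl | hl
    exacts [h0, h1 l hl]
  have hsmall : ∀ e, v (g.eval t) < b m * v (i π) ^ e := by
    intro e
    by_contra! hle
    exact hg ⟨e, fun l => le_trans (by gcongr; exact hall l) hle⟩
  obtain ⟨e, he⟩ := hg'
  obtain ⟨f, hf⟩ := hL.exists_pow_le_natCast (n := m) (by omega)
  have hbig : b m * v (i π) ^ (e + f) ≤ v (g.derivative.eval t) * ρ := by
    have h2 := he (m - 1)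
    have h3 : taylor c g.derivative = (taylor c g).derivative := by
      simp [taylor_apply, derivative_comp]
    rw [h3, coeff_derivative] at h2
    obtain ⟨m', rfl⟩ : ∃ m', m = m' + 1 := ⟨m - 1, by omega⟩
    rw [Nat.add_sub_cancel] at h2
    calc b (m' + 1) * v (i π) ^ (e + f) 
        = v ((taylor c g).coeff (m' + 1)) * v (i π) ^ f * ρ ^ m' * v (i π) ^ e * ρ := by
          simp only [hb, pow_add, pow_one]; simp only [mul_assoc, mul_left_comm, mul_comm]
      _ ≤ v ((taylor c g).coeff (m' + 1)) * v ((m' + 1 : ℕ) : L) * ρ ^ m' * v (i π) ^ e * ρ := by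
          gcongr
      _ ≤ _ := by
          rw [← map_mul]
          push_cast
          gcongr
  have hgt : g.derivative.eval t ≠ 0 := by
    intro h
    rw [h, map_zero, zero_mul] at hbig
    have := (zero_le).trans_lt (hsmall (e + f))
    exact absurd hbig (not_le.2 this)
  obtain ⟨z, hz, -⟩ := hL.exists_root_near g t (ρ := ρ) (e := e + f) (N := 2 * (e + f) + 1)
    (by omega) hgt hδ (fun l => by
      refine le_trans ?_ hbig
      gcongr
      exact valuation_taylor_coeff_le_of_le v hall le_rfl le_rfl l) (by
      refine le_trans (mul_le_mul' (hsmall (2 * (e + f) + 1)).le le_rfl) ?_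
      rw [mul_right_comm]
      gcongr)
  exact ⟨z, hz⟩

theorem exists_isTame (hL : IsPadicLike i v π q P)
    (hS : ∀ g : S[X], g ≠ 0 → g.natDegree < d → ∀ x, (g.map j).eval x = 0 → ∃ c, j c = x)
    (hj : Function.Injective j) (t : L) (g : S[X]) (hg : g.natDegree < d) :
    ∃ c : S, IsTame v (v (i π)) t (j c) (g.map j) := by
  have hp := hL.pi_ne_zero
  induction hn : g.natDegree using Nat.strong_induction_on generalizing g with
  | _ n ih =>
  by_cases h0 : g.natDegree = 0
  · exact ⟨0, IsTame.of_natDegree_eq_zero (Nat.le_zero.1 (natDegree_map_le.trans h0.le))⟩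
  have hgn : g ≠ 0 := fun h => h0 (by simp [h])
  by_cases hroot : ∃ z, (g.map j).eval z = 0
  · obtain ⟨z, hz⟩ := hroot
    obtain ⟨x, rfl⟩ := hS g hgn hg z hz
    have hx : g.IsRoot x := hj (by rwa [← eval_map_apply, map_zero])
    have hmul := mul_divByMonic_eq_iff_isRoot.2 hx
    have hlt : (g /ₘ (X - C x)).natDegree < g.natDegree := by
      have : Nontrivial S := nontrivial_of_ne _ _ (fun h : (1 : S) = 0 => hgn (by
        rw [← one_mul g, ← C_1, h, C_0, zero_mul]))
      rw [natDegree_divByMonic _ (monic_X_sub_C x), natDegree_X_sub_C]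
      omega
    obtain ⟨c, hc⟩ := ih _ (hn ▸ hlt) _ (hlt.trans hg) rfl
    rw [← hmul, Polynomial.map_mul, Polynomial.map_sub, map_X, map_C]
    rcases le_total (v (t - j x)) (v (t - j c)) with h | h
    · exact ⟨x, (IsTame.X_sub_C le_rfl).mul (hc.mono hp h)⟩
    · exact ⟨c, (IsTame.X_sub_C h).mul hc⟩
  · have hlt := natDegree_derivative_lt h0
    obtain ⟨c, hc⟩ := ih _ (hn ▸ hlt) _ (hlt.trans hg) rfl
    rw [← derivative_map] at hc
    refine ⟨c, ?_⟩
    by_contra hg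
    exact hroot (hL.exists_root_of_not_isTame hc hg)

theorem exists_isTame_finset (hL : IsPadicLike i v π q P)
    (hS : ∀ g : S[X], g ≠ 0 → g.natDegree < d → ∀ x, (g.map j).eval x = 0 → ∃ c, j c = x)
    (hj : Function.Injective j) (t : L) (G : Finset S[X]) (hG : ∀ g ∈ G, g.natDegree < d) :
    ∃ (c : S) (e : ℕ), ∀ g ∈ G, ∀ l,
      v ((taylor (j c) (g.map j)).coeff l) * v (t - j c) ^ l * v (i π) ^ e ≤
        v ((g.map j).eval t) := by
  classical
  have hp := hL.pi_ne_zero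
  have h1 : ∃ c : S, ∀ g ∈ G, IsTame v (v (i π)) t (j c) (g.map j) := by
    induction G using Finset.induction_on with
    | empty => exact ⟨0, by simp⟩
    | insert g G _ ih =>
      obtain ⟨c, hc⟩ := ih fun g hg => hG g (Finset.mem_insert_of_mem hg)
      obtain ⟨c', hc'⟩ := hL.exists_isTame hS hj t g (hG g (Finset.mem_insert_self _ _))
      rcases le_total (v (t - j c)) (v (t - j c')) with h | h
      · exact ⟨c, Finset.forall_mem_insert _ _ _ |>.2 ⟨hc'.mono hp h, hc⟩⟩
      · exact ⟨c', Finset.forall_mem_insert _ _ _ |>.2 ⟨hc', fun g hg => (hc g hg).mono hp h⟩⟩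
  obtain ⟨c, hc⟩ := h1
  choose! e he using hc
  refine ⟨c, G.sup e, fun g hg l => le_trans ?_ (he g hg l)⟩
  gcongr 1
  exact hL.pi_pow_le (Finset.le_sup hg)

/-- If the value `v (t - c)` always lies in the value group of `S`, then `t` can be approximated
by elements of `S` well enough to control the values of finitely many polynomials. -/
theorem exists_near (hL : IsPadicLike i v π q P) {ι : k →+* S} (hι : j.comp ι = i)
    (hS : ∀ g : S[X], g ≠ 0 → g.natDegree < d → ∀ x, (g.map j).eval x = 0 → ∃ c, j c = x)
    (hj : Function.Injective j) {t : L} (ht : ∀ c, j c ≠ t) (hv : ∀ c, ∃ s, v (j s) = v (t - j c))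
    (G : Finset S[X]) (hG : ∀ g ∈ G, g.natDegree < d) :
    ∃ e : ℕ, ∀ N : ℕ, ∃ c s : S, s ≠ 0 ∧ v (t - j c) ≤ v (j s) * v (i π) ^ N ∧
      ∀ g ∈ G, ∀ l, v ((taylor (j c) (g.map j)).coeff l) * v (j s) ^ l * v (i π) ^ e ≤
        v ((g.map j).eval (j c)) := by
  obtain ⟨c, e, he⟩ := hL.exists_isTame_finset hS hj t G hG
  obtain ⟨s, hs⟩ := hv c
  have hδ : t - j c ≠ 0 := sub_ne_zero.2 (ht c).symm
  have hvδ : v (t - j c) ≠ 0 := by simpa using hδ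
  have hjs : j s ≠ 0 := by rw [← hs] at hvδ; simpa using hvδ
  refine ⟨e, fun N => ?_⟩
  have hu : v ((t - j c) / j s) = 1 := by rw [map_div₀, hs, div_self hvδ]
  obtain ⟨r, hr⟩ := hL.approx _ hu.le (N + e + 1)
  have hnear : v (t - j (c + s * ι r)) ≤ v (j s) * v (i π) ^ (N + e + 1) := by
    have : t - j (c + s * ι r) = j s * ((t - j c) / j s - i r) := by
      rw [← hι, map_add, map_mul, RingHom.comp_apply]; field_simp; ring
    rw [this, map_mul]
    gcongr
  refine ⟨c + s * ι r, s, fun h => hjs (by rw [h, map_zero]), hnear.trans ?_, fun g hg l => ?_⟩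
  · gcongr 1
    exact hL.pi_pow_le (by omega)
  have hpe := hL.pi_pow_pos e
  have hB : ∀ l, v ((taylor (j (c + s * ι r)) (g.map j)).coeff l) * v (j s) ^ l ≤
      v ((g.map j).eval t) / v (i π) ^ e := by
    refine valuation_taylor_coeff_le_of_le v (c := j c) (ρ := v (j s)) (fun l => ?_) ?_ le_rfl
    · rw [le_div_iff₀ hpe, hs]; exact he g hg l
    · rw [show j (c + s * ι r) - j c = (t - j c) - (t - j (c + s * ι r)) by ring]
      refine (v.map_sub _ _).trans (max_le hs.ge (hnear.trans ?_))
      exact mul_le_of_le_one_right' (hL.pi_pow_le_one _)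
  have hd := valuation_eval_sub_eval_le v (fun l _ => hB l) hnear (hL.pi_pow_le_one _)
  have heq : v ((g.map j).eval (j (c + s * ι r))) = v ((g.map j).eval t) := by
    rcases eq_or_ne (v ((g.map j).eval t)) 0 with h | h
    · rw [h, zero_div, zero_mul, le_zero_iff, Valuation.zero_iff, sub_eq_zero] at hd
      rw [hd]
    · symm
      rw [Valuation.map_sub_swap] at hd
      symm
      refine Valuation.map_eq_of_sub_lt v (hd.trans_lt ?_)
      rw [div_mul_eq_mul_div, div_lt_iff₀ hpe]
      exact mul_lt_mul_of_pos_left (hL.pi_pow_lt (by omega)) (zero_lt_iff.2 h)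
  rw [heq, ← le_div_iff₀ hpe]
  exact hB l

end IsPadicLike

/-- The elements `a` and `b` are represented by the same element of `k` modulo nonzero `n`-th
powers. -/
def SameCoset {k L L' : Type*} [Field k] [Field L] [Field L'] (i : k →+* L) (i' : k →+* L')
    (n : ℕ) (a : L) (b : L') : Prop :=
  ∃ c y y', y ≠ 0 ∧ y' ≠ 0 ∧ a = i c * y ^ n ∧ b = i' c * y' ^ n

namespace SameCoset

variable {k L L' : Type*} [Field k] [Field L] [Field L'] {i : k →+* L} {i' : k →+* L'}
  {m n : ℕ} {a a₁ : L} {b b₁ : L'}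

theorem map (c : k) : SameCoset i i' n (i c) (i' c) :=
  ⟨c, 1, 1, one_ne_zero, one_ne_zero, by simp, by simp⟩

theorem mul (h : SameCoset i i' n a b) (h₁ : SameCoset i i' n a₁ b₁) :
    SameCoset i i' n (a * a₁) (b * b₁) := by
  obtain ⟨c, y, y', hy, hy', rfl, rfl⟩ := h
  obtain ⟨d, z, z', hz, hz', rfl, rfl⟩ := h₁
  exact ⟨c * d, y * z, y' * z', mul_ne_zero hy hz, mul_ne_zero hy' hz', by rw [map_mul]; ring,
    by rw [map_mul]; ring⟩

theorem pow (h : SameCoset i i' n a b) (l : ℕ) : SameCoset i i' n (a ^ l) (b ^ l) := by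
  induction l with
  | zero => simpa using map (i := i) (i' := i') (n := n) 1
  | succ l ih => rw [pow_succ, pow_succ]; exact ih.mul h

theorem inv (h : SameCoset i i' n a b) : SameCoset i i' n a⁻¹ b⁻¹ := by
  obtain ⟨c, y, y', hy, hy', rfl, rfl⟩ := h
  exact ⟨c⁻¹, y⁻¹, y'⁻¹, inv_ne_zero hy, inv_ne_zero hy', by rw [map_inv₀]; simp [mul_comm],
    by rw [map_inv₀]; simp [mul_comm]⟩

theorem of_dvd (h : SameCoset i i' n a b) (hm : m ∣ n) : SameCoset i i' m a b := by
  obtain ⟨c, y, y', hy, hy', rfl, rfl⟩ := h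
  obtain ⟨l, rfl⟩ := hm
  exact ⟨c, y ^ l, y' ^ l, pow_ne_zero _ hy, pow_ne_zero _ hy', by ring, by ring⟩

theorem mul_pow (h : SameCoset i i' n a b) {y : L} {y' : L'} (hy : y ≠ 0) (hy' : y' ≠ 0) :
    SameCoset i i' n (a * y ^ n) (b * y' ^ n) :=
  h.mul ⟨1, y, y', hy, hy', by simp, by simp⟩

theorem eq_zero_iff (h : SameCoset i i' n a b) : a = 0 ↔ b = 0 := by
  obtain ⟨c, y, y', hy, hy', rfl, rfl⟩ := h
  simp [hy, hy']

end SameCoset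

namespace IsPadicLike

variable {k L Γ L' Γ' S : Type*} [Field k] [Field L] [LinearOrderedCommGroupWithZero Γ]
    {i : k →+* L} {v : Valuation L Γ} {π : k} {q : ℕ} {P : ℕ → k → Prop}
    [Field L'] [LinearOrderedCommGroupWithZero Γ'] {i' : k →+* L'} {v' : Valuation L' Γ'}

theorem exists_pow_eq_iff (hL : IsPadicLike i v π q P) (hL' : IsPadicLike i' v' π q P) {n : ℕ}
    {a : L} {b : L'} (h : SameCoset i i' n a b) : (∃ y, y ^ n = a) ↔ ∃ y, y ^ n = b := by
  obtain ⟨c, y, y', hy, hy', rfl, rfl⟩ := h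
  have h1 : (∃ z, z ^ n = i c * y ^ n) ↔ ∃ z, z ^ n = i c :=
    ⟨fun ⟨z, hz⟩ => ⟨z / y, by rw [div_pow, hz]; field_simp⟩,
      fun ⟨z, hz⟩ => ⟨z * y, by rw [_root_.mul_pow, hz]⟩⟩
  have h2 : (∃ z, z ^ n = i' c * y' ^ n) ↔ ∃ z, z ^ n = i' c :=
    ⟨fun ⟨z, hz⟩ => ⟨z / y', by rw [div_pow, hz]; field_simp⟩,
      fun ⟨z, hz⟩ => ⟨z * y', by rw [_root_.mul_pow, hz]⟩⟩
  rw [h1, h2, hL.pow_iff, hL'.pow_iff]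

variable [CommRing S] {ι : k →+* S} {j : S →+* L} {j' : S →+* L'}

theorem valuation_le_iff (hL : IsPadicLike i v π q P) (hL' : IsPadicLike i' v' π q P)
    (hι : j.comp ι = i) (hι' : j'.comp ι = i')
    (hS : ∀ n, 0 < n → ∀ z, SameCoset i i' n (j z) (j' z)) (z w : S) :
    v (j z) ≤ v (j w) ↔ v' (j' z) ≤ v' (j' w) := by
  by_cases hw : j w = 0
  · have hw' := (hS 1 one_pos w).eq_zero_iff.1 hw
    rw [hw, hw', map_zero, map_zero, le_zero_iff, le_zero_iff, Valuation.zero_iff,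
      Valuation.zero_iff]
    exact (hS 1 one_pos z).eq_zero_iff
  have hw' : j' w ≠ 0 := fun h => hw ((hS 1 one_pos w).eq_zero_iff.2 h)
  have h1 : v (j z) ≤ v (j w) ↔ ∃ y, y ^ q = j (w ^ q + ι π * z ^ q) := by
    rw [← div_le_one₀ (zero_lt_iff.2 (v.ne_zero_iff.2 hw)), ← map_div₀, hL.le_one_iff]
    have e : j (w ^ q + ι π * z ^ q) = (1 + i π * (j z / j w) ^ q) * j w ^ q := by
      rw [← hι]; simp only [map_add, map_mul, map_pow, RingHom.comp_apply, div_pow]; field_simp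
    rw [e]
    exact ⟨fun ⟨y, hy⟩ => ⟨y * j w, by rw [mul_pow, hy]⟩,
      fun ⟨y, hy⟩ => ⟨y / j w, by rw [div_pow, hy]; field_simp⟩⟩
  have h2 : v' (j' z) ≤ v' (j' w) ↔ ∃ y, y ^ q = j' (w ^ q + ι π * z ^ q) := by
    rw [← div_le_one₀ (zero_lt_iff.2 (v'.ne_zero_iff.2 hw')), ← map_div₀, hL'.le_one_iff]
    have e : j' (w ^ q + ι π * z ^ q) = (1 + i' π * (j' z / j' w) ^ q) * j' w ^ q := by
      rw [← hι']; simp only [map_add, map_mul, map_pow, RingHom.comp_apply, div_pow]; field_simp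
    rw [e]
    exact ⟨fun ⟨y, hy⟩ => ⟨y * j' w, by rw [mul_pow, hy]⟩,
      fun ⟨y, hy⟩ => ⟨y / j' w, by rw [div_pow, hy]; field_simp⟩⟩
  rw [h1, h2, hL.exists_pow_eq_iff hL' (hS q hL.pos _)]

theorem injective_of_sameCoset [Nontrivial S]
    (hinv : ∀ x : S, x ≠ 0 → ∃ y, x * y = 1) : Function.Injective j := by
  rw [injective_iff_map_eq_zero]
  intro x hx
  by_contra h
  obtain ⟨y, hy⟩ := hinv x h
  have := congrArg j hy
  rw [map_mul, hx, zero_mul, map_one] at this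
  exact zero_ne_one this

section near

variable [CharZero k]

/-- Closeness to a common centre transfers the cosets of the values of a polynomial. -/
theorem exists_sameCoset_eval (hL : IsPadicLike i v π q P) (hL' : IsPadicLike i' v' π q P)
    (hι : j.comp ι = i) (hι' : j'.comp ι = i')
    (hS : ∀ n, 0 < n → ∀ z, SameCoset i i' n (j z) (j' z)) {n : ℕ} (hn : 0 < n) :
    ∃ N, ∀ (e : ℕ) (c s : S) (t : L) (t' : L') (g : S[X]),
      v (t - j c) ≤ v (j s) * v (i π) ^ (N + e) →
      v' (t' - j' c) ≤ v' (j' s) * v' (i' π) ^ (N + e) →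
      (∀ l, v ((taylor (j c) (g.map j)).coeff l) * v (j s) ^ l * v (i π) ^ e ≤
        v ((g.map j).eval (j c))) →
      SameCoset i i' n ((g.map j).eval t) ((g.map j').eval t') := by
  obtain ⟨N, hN⟩ := hL.exists_eq_mul_pow hn
  obtain ⟨N', hN'⟩ := hL'.exists_eq_mul_pow hn
  refine ⟨N + N', fun e c s t t' g ht ht' hg => ?_⟩
  have hg' : ∀ l, v' ((taylor (j' c) (g.map j')).coeff l) * v' (j' s) ^ l * v' (i' π) ^ e ≤
      v' ((g.map j').eval (j' c)) := by
    intro l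
    have := (hL.valuation_le_iff hL' hι hι' hS ((taylor c g).coeff l * s ^ l * ι π ^ e)
      (g.eval c)).1 (by
        have h := hg l
        rw [← map_taylor, coeff_map, eval_map_apply] at h
        rw [← hι] at h
        simpa using h)
    rw [← map_taylor, coeff_map, eval_map_apply, ← hι']
    simpa using this
  obtain ⟨y, hy, hy'⟩ := hN ((g.map j).eval t) ((g.map j).eval (j c)) (by
    have := valuation_eval_sub_eval_le v
      (fun l _ => (le_div_iff₀ (hL.pi_pow_pos e)).2 (hg l)) ht (hL.pi_pow_le_one _)
    refine this.trans ?_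
    rw [pow_add _ (N + N'), div_mul_eq_mul_div, div_le_iff₀ (hL.pi_pow_pos e), ← mul_assoc]
    gcongr 2
    exact hL.pi_pow_le (by omega))
  obtain ⟨z, hz, hz'⟩ := hN' ((g.map j').eval t') ((g.map j').eval (j' c)) (by
    have := valuation_eval_sub_eval_le v'
      (fun l _ => (le_div_iff₀ (hL'.pi_pow_pos e)).2 (hg' l)) ht' (hL'.pi_pow_le_one _)
    refine this.trans ?_
    rw [pow_add _ (N + N'), div_mul_eq_mul_div, div_le_iff₀ (hL'.pi_pow_pos e), ← mul_assoc]
    gcongr 2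
    exact hL'.pi_pow_le (by omega))
  rw [hy', hz', eval_map_apply, eval_map_apply]
  exact (hS n hn _).mul_pow hy hz

theorem exists_transfer_of_near (hL : IsPadicLike i v π q P) (hL' : IsPadicLike i' v' π q P)
    (hι : j.comp ι = i) (hι' : j'.comp ι = i')
    (hS : ∀ n, 0 < n → ∀ z, SameCoset i i' n (j z) (j' z)) (hj : Function.Injective j) {d : ℕ}
    (hc : ∀ g : S[X], g ≠ 0 → g.natDegree < d → ∀ x, (g.map j).eval x = 0 → ∃ c, j c = x)
    {t : L} (ht : ∀ c, j c ≠ t) (hv : ∀ c, ∃ s, v (j s) = v (t - j c))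
    (G : Finset S[X]) (hG : ∀ g ∈ G, g.natDegree < d) {n : ℕ} (hn : 0 < n) :
    ∃ t' : L', ∀ g ∈ G, SameCoset i i' n ((g.map j).eval t) ((g.map j').eval t') := by
  obtain ⟨N, hN⟩ := hL.exists_sameCoset_eval hL' hι hι' hS hn
  obtain ⟨e, he⟩ := hL.exists_near hι hc hj ht hv G hG
  obtain ⟨c, s, -, hts, hg⟩ := he (N + e)
  exact ⟨j' c, fun g hgG => hN e c s t (j' c) g hts (by simp) (hg g hgG)⟩

theorem exists_root_transfer_of_near (hL : IsPadicLike i v π q P)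
    (hL' : IsPadicLike i' v' π q P)
    (hι : j.comp ι = i) (hι' : j'.comp ι = i')
    (hS : ∀ n, 0 < n → ∀ z, SameCoset i i' n (j z) (j' z)) (hj : Function.Injective j)
    {f : S[X]} (hf : f.Monic)
    (hc : ∀ g : S[X], g ≠ 0 → g.natDegree < f.natDegree → ∀ x, (g.map j).eval x = 0 → ∃ c, j c = x)
    {t : L} (hft : (f.map j).eval t = 0) (ht : ∀ c, j c ≠ t)
    (hv : ∀ c, ∃ s, v (j s) = v (t - j c))
    (G : Finset S[X]) (hG : ∀ g ∈ G, g.natDegree < f.natDegree) {n : ℕ} (hn : 0 < n) :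
    ∃ t' : L', (f.map j').eval t' = 0 ∧
      ∀ g ∈ G, SameCoset i i' n ((g.map j).eval t) ((g.map j').eval t') := by
  classical
  obtain ⟨N, hN⟩ := hL.exists_sameCoset_eval hL' hι hι' hS hn
  have hd : f.natDegree ≠ 0 := by
    intro h
    rw [hf.natDegree_eq_zero.1 h] at hft
    simp at hft
  obtain ⟨e, he⟩ := hL.exists_near hι hc hj ht hv (insert f.derivative G) (by
    intro g hg
    rcases Finset.mem_insert.1 hg with rfl | hg
    exacts [natDegree_derivative_lt hd, hG g hg])
  have hnat : ∃ e₁ : ℕ, ∀ l < f.natDegree, v (i π) ^ e₁ ≤ v ((l + 1 : ℕ) : L) := by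
    choose E hE using fun l : ℕ => hL.exists_pow_le_natCast (n := l + 1) (by omega)
    exact ⟨(Finset.range f.natDegree).sup E, fun l hl =>
      (hL.pi_pow_le (Finset.le_sup (Finset.mem_range.2 hl))).trans (hE l)⟩
  obtain ⟨e₁, he₁⟩ := hnat
  set e₂ := e + e₁ with he₂
  obtain ⟨c, s, hs, hts, hg⟩ := he (N + e + (2 * e₂ + 1))
  have hjs : j s ≠ 0 := (map_ne_zero_iff j hj).2 hs
  have hD : ∀ l, 1 ≤ l → v ((taylor (j c) (f.map j)).coeff l) * v (j s) ^ l * v (i π) ^ e₂ ≤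
      v ((f.map j).derivative.eval (j c)) * v (j s) := by
    intro l hl
    obtain ⟨l, rfl⟩ : ∃ m, l = m + 1 := ⟨l - 1, by omega⟩
    by_cases hlt : l < f.natDegree
    · have h2 := hg f.derivative (Finset.mem_insert_self _ _) l
      have h3 : taylor (j c) (f.map j).derivative = (taylor (j c) (f.map j)).derivative := by
        simp [taylor_apply, derivative_comp]
      rw [← derivative_map, h3, coeff_derivative] at h2
      calc _ = v ((taylor (j c) (f.map j)).coeff (l + 1)) * v (i π) ^ e₁ * v (j s) ^ l *
              v (i π) ^ e * v (j s) := by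
            rw [pow_succ (v (j s)), he₂, pow_add]; simp only [mul_assoc, mul_left_comm, mul_comm]
        _ ≤ v ((taylor (j c) (f.map j)).coeff (l + 1)) * v ((l + 1 : ℕ) : L) * v (j s) ^ l *
              v (i π) ^ e * v (j s) := by
            gcongr
            exact he₁ l hlt
        _ ≤ _ := by
            rw [← map_mul]
            push_cast
            gcongr
    · rw [coeff_eq_zero_of_natDegree_lt (by
        rw [natDegree_taylor]
        exact natDegree_map_le.trans_lt (by omega))]
      simp
  have h0 : v ((f.map j).eval (j c)) * v (i π) ^ e₂ ≤
      v ((f.map j).derivative.eval (j c)) * v (j s) * v (i π) ^ (N + e + (2 * e₂ + 1)) := by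
    have := valuation_eval_sub_eval_le v
      (fun l hl => (le_div_iff₀ (hL.pi_pow_pos e₂)).2 (hD l hl)) hts (hL.pi_pow_le_one _)
    rw [hft, zero_sub, Valuation.map_neg] at this
    rwa [div_mul_eq_mul_div, le_div_iff₀ (hL.pi_pow_pos e₂)] at this
  have hD0 : ∀ l, v ((taylor (j c) (f.map j)).coeff l) * v (j s) ^ l * v (i π) ^ e₂ ≤
      v ((f.map j).derivative.eval (j c)) * v (j s) := by
    intro l
    rcases Nat.eq_zero_or_pos l with rfl | hl
    · rw [taylor_coeff_zero, pow_zero, mul_one]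
      exact h0.trans (mul_le_of_le_one_right' (hL.pi_pow_le_one _))
    · exact hD l hl
  have hne : (f.map j).derivative.eval (j c) ≠ 0 := by
    intro h
    have h1 := hD0 f.natDegree
    have h2 : (taylor (j c) (f.map j)).coeff f.natDegree = 1 := by
      have := (hf.map j).leadingCoeff
      rwa [← leadingCoeff_taylor (r := j c), leadingCoeff, natDegree_taylor,
        hf.natDegree_map] at this
    rw [h, h2, map_zero, zero_mul, map_one, one_mul, le_zero_iff] at h1
    exact mul_ne_zero (pow_ne_zero _ (v.ne_zero_iff.2 hjs)) (hL.pi_pow_pos e₂).ne' h1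
  have hS0 : ∀ x, j x = 0 ↔ j' x = 0 := fun x => (hS 1 one_pos x).eq_zero_iff
  have hjs' : j' s ≠ 0 := fun h => hjs ((hS0 s).2 h)
  rw [derivative_map, eval_map_apply] at hne hD0 h0
  have hD0' : ∀ l, v' ((taylor (j' c) (f.map j')).coeff l) * v' (j' s) ^ l * v' (i' π) ^ e₂ ≤
      v' ((f.map j').derivative.eval (j' c)) * v' (j' s) := by
    intro l
    have := (hL.valuation_le_iff hL' hι hι' hS ((taylor c f).coeff l * s ^ l * ι π ^ e₂)
      (f.derivative.eval c * s)).1 (by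
        have h := hD0 l
        rw [← map_taylor, coeff_map] at h
        rw [← hι] at h
        simpa using h)
    rw [← map_taylor, coeff_map, derivative_map, eval_map_apply, ← hι']
    simpa using this
  have h0' : v' ((f.map j').eval (j' c)) * v' (i' π) ^ e₂ ≤
      v' ((f.map j').derivative.eval (j' c)) * v' (j' s) * v' (i' π) ^ (N + e + (2 * e₂ + 1)) := by
    have := (hL.valuation_le_iff hL' hι hι' hS (f.eval c * ι π ^ e₂)
      (f.derivative.eval c * s * ι π ^ (N + e + (2 * e₂ + 1)))).1 (by
        have h := h0
        rw [eval_map_apply] at h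
        rw [← hι] at h
        simpa using h)
    rw [derivative_map, eval_map_apply, eval_map_apply, ← hι']
    simpa using this
  have hne' : (f.map j').derivative.eval (j' c) ≠ 0 := by
    rw [derivative_map, eval_map_apply]
    exact fun h => hne ((hS0 _).2 h)
  obtain ⟨z, hz, hzc⟩ := hL'.exists_root_near (f.map j') (j' c) (ρ := v' (j' s)) (e := e₂)
    (by omega) hne' (v'.ne_zero_iff.2 hjs') hD0' h0'
  have hne'' := v'.ne_zero_iff.2 hne'
  have hzs : v' (z - j' c) ≤ v' (j' s) * v' (i' π) ^ (N + e) := by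
    refine le_of_mul_le_mul_right ?_ (mul_pos (zero_lt_iff.2 hne'') (hL'.pi_pow_pos e₂))
    calc _ = v' (z - j' c) * v' ((f.map j').derivative.eval (j' c)) * v' (i' π) ^ e₂ :=
          (mul_assoc _ _ _).symm
      _ ≤ v' ((f.map j').eval (j' c)) * v' (i' π) ^ e₂ := by gcongr
      _ ≤ _ := h0'
      _ ≤ v' ((f.map j').derivative.eval (j' c)) * v' (j' s) * v' (i' π) ^ (N + e + e₂) := by
          gcongr 1
          exact hL'.pi_pow_le (by omega)
      _ = _ := by rw [pow_add _ (N + e)]; simp only [mul_assoc, mul_left_comm, mul_comm]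
  refine ⟨z, hz, fun g hgG => hN e c s t z g (hts.trans ?_) hzs
    (hg g (Finset.mem_insert_of_mem hgG))⟩
  gcongr 1
  exact hL.pi_pow_le (by omega)

end near

end IsPadicLike

namespace IsPadicLike

variable {k L Γ S : Type*} [Field k] [Field L] [LinearOrderedCommGroupWithZero Γ]
    {i : k →+* L} {v : Valuation L Γ} {π : k} {q : ℕ} {P : ℕ → k → Prop} [CommRing S]
    {ι : k →+* S} {j : S →+* L}

theorem exists_pow_eq_of_valuation_pow_eq [CharZero k] (hL : IsPadicLike i v π q P)
    (hι : j.comp ι = i)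
    {s : L} (hs : s ≠ 0) {m : ℕ} (hm : 0 < m) {a : S} (h : v (j a) = v (s ^ m)) :
    ∃ (b : S) (r : L), r ^ m = j b ∧ v r = v s := by
  obtain ⟨N, hN⟩ := hL.exists_eq_mul_pow hm
  have hsm : v (s ^ m) ≠ 0 := v.ne_zero_iff.2 (pow_ne_zero _ hs)
  have hja : j a ≠ 0 := v.ne_zero_iff.1 (h ▸ hsm)
  have hu : v (s ^ m / j a) = 1 := by rw [map_div₀, h, div_self hsm]
  obtain ⟨r, hr, hr1, hr2⟩ := hL.exists_approx (u := s ^ m / j a) (N := 0) hu.le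
    (by rw [hu, pow_zero]) N
  rw [← hr2] at hr1
  obtain ⟨w, hw, hwr⟩ := hN _ _ hr1
  have hvw : v w = 1 := by
    have := congrArg v hwr
    rw [map_mul, hr2, hu, one_mul, map_pow] at this
    exact (pow_eq_one_iff_of_nonneg zero_le hm.ne').1 this.symm
  refine ⟨a * ι r, s / w, ?_, by rw [map_div₀, hvw, div_one]⟩
  have e : s ^ m = i r * w ^ m * j a := by rw [← hwr]; field_simp
  rw [div_pow, e, ← hι, map_mul, RingHom.comp_apply]
  field_simp

theorem valuation_pow_ne [CharZero k] (hL : IsPadicLike i v π q P) (hι : j.comp ι = i) {d : ℕ}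
    (hc : ∀ g : S[X], g ≠ 0 → g.natDegree < d → ∀ x, (g.map j).eval x = 0 → ∃ c, j c = x)
    {s : L} (hs : ∀ a, v (j a) ≠ v s) {m : ℕ} (hm : 0 < m) (hmd : m < d) (a : S) :
    v (j a) ≠ v (s ^ m) := by
  intro h
  have hs0 : s ≠ 0 := fun h0 => hs 0 (by rw [map_zero, h0])
  have : Nontrivial S := j.domain_nontrivial
  obtain ⟨b, r, hr, hrs⟩ := hL.exists_pow_eq_of_valuation_pow_eq hι hs0 hm h
  obtain ⟨x, hx⟩ := hc (X ^ m - C b) (X_pow_sub_C_ne_zero hm b)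
    (by rwa [natDegree_X_pow_sub_C]) r (by simp [hr])
  exact hs x (by rw [hx, hrs])

theorem valuation_gap (hL : IsPadicLike i v π q P) (hι : j.comp ι = i) {s : L}
    (hs : ∀ a, v (j a) ≠ v s) (a : S) :
    (∀ N : ℕ, v s ≤ v (j a) * v (i π) ^ N) ∨ (∀ N : ℕ, v (j a) ≤ v s * v (i π) ^ N) := by
  have hs0 : v s ≠ 0 := fun h0 => hs 0 (by rw [map_zero, map_zero, h0])
  by_contra! hcon
  obtain ⟨⟨N, hN⟩, M, hM⟩ := hcon
  have ha0 : v (j a) ≠ 0 := fun h => by rw [h] at hM; exact not_lt_zero hM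
  rcases le_total (v s) (v (j a)) with hle | hle
  · obtain ⟨r, hr, -, hr2⟩ := hL.exists_approx (u := s / j a) (N := N)
      (by rwa [map_div₀, div_le_one₀ (zero_lt_iff.2 ha0)])
      (by rw [map_div₀, le_div_iff₀ (zero_lt_iff.2 ha0), mul_comm]; exact hN.le) 0
    refine hs (a * ι r) ?_
    rw [map_mul, ← RingHom.comp_apply, hι, map_mul, hr2, map_div₀, mul_div_cancel₀ _ ha0]
  · obtain ⟨r, hr, -, hr2⟩ := hL.exists_approx (u := j a / s) (N := M)
      (by rwa [map_div₀, div_le_one₀ (zero_lt_iff.2 hs0)])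
      (by rw [map_div₀, le_div_iff₀ (zero_lt_iff.2 hs0), mul_comm]; exact hM.le) 0
    refine hs (a * ι r⁻¹) ?_
    rw [map_mul, ← RingHom.comp_apply, hι, map_mul, map_inv₀, map_inv₀, hr2, map_div₀, inv_div,
      mul_div_cancel₀ _ ha0]

theorem valuation_gap_mul (hL : IsPadicLike i v π q P) (hι : j.comp ι = i)
    (hinv : ∀ x : S, x ≠ 0 → ∃ y, x * y = 1) {s : L}
    (hs : ∀ a, v (j a) ≠ v s) (a : S) {b : S} (hb : b ≠ 0) :
    (∀ N : ℕ, v (j b * s) ≤ v (j a) * v (i π) ^ N) ∨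
      (∀ N : ℕ, v (j a) ≤ v (j b * s) * v (i π) ^ N) := by
  obtain ⟨b', hb'⟩ := hinv b hb
  have e : j a = j b * j (a * b') := by
    rw [← map_mul, mul_left_comm, hb', mul_one]
  rw [e, map_mul, map_mul]
  rcases hL.valuation_gap hι hs (a * b') with h | h
  · left; intro N; rw [mul_assoc]; gcongr; exact h N
  · right; intro N; rw [mul_assoc]; gcongr; exact h N

/-- If no positive power of `s` has its value in the value group of `S`, then every polynomial has
a dominant term at `s`. -/
theorem exists_dominant (hL : IsPadicLike i v π q P) (hι : j.comp ι = i)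
    (hinv : ∀ x : S, x ≠ 0 → ∃ y, x * y = 1) {s : L} (hs0 : s ≠ 0) {g : S[X]} (hg : g ≠ 0)
    (hs : ∀ m, 0 < m → m ≤ g.natDegree → ∀ a, v (j a) ≠ v (s ^ m)) :
    ∃ l₀, g.coeff l₀ ≠ 0 ∧ ∀ l, l ≠ l₀ → ∀ N : ℕ,
      v (j (g.coeff l) * s ^ l) ≤ v (j (g.coeff l₀) * s ^ l₀) * v (i π) ^ N := by
  have : Nontrivial S := j.domain_nontrivial
  have hj : Function.Injective j := injective_of_sameCoset hinv
  obtain ⟨l₀, hl₀, hmax⟩ := Finset.exists_max_image g.support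
    (fun l => v (j (g.coeff l) * s ^ l)) (nonempty_support_iff.2 hg)
  rw [mem_support_iff] at hl₀
  refine ⟨l₀, hl₀, fun l hl => ?_⟩
  by_cases hl0 : g.coeff l = 0
  · intro N; simp [hl0]
  have hvl : v (j (g.coeff l) * s ^ l) ≠ 0 :=
    v.ne_zero_iff.2 (mul_ne_zero ((map_ne_zero_iff j hj).2 hl0) (pow_ne_zero _ hs0))
  have hno : ¬ v (j (g.coeff l₀) * s ^ l₀) ≤ v (j (g.coeff l) * s ^ l) * v (i π) ^ 1 := by
    intro h
    refine absurd (hmax l (mem_support_iff.2 hl0)) (not_le.2 (h.trans_lt ?_))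
    rw [pow_one]
    exact mul_lt_of_lt_one_right (zero_lt_iff.2 hvl) hL.lt_one
  have hd := le_natDegree_of_ne_zero hl₀
  have hd' := le_natDegree_of_ne_zero hl0
  rcases lt_or_gt_of_ne hl with h | h
  · obtain ⟨m, rfl⟩ := Nat.exists_eq_add_of_lt h
    rcases hL.valuation_gap_mul hι hinv (hs (m + 1) (by omega) (by omega)) (g.coeff l) hl₀
      with h1 | h1
    · refine absurd ?_ hno
      rw [show s ^ (l + m + 1) = s ^ (m + 1) * s ^ l by ring, ← mul_assoc, map_mul,
        map_mul _ _ (s ^ l), mul_right_comm]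
      gcongr
      exact h1 1
    · intro N
      rw [show s ^ (l + m + 1) = s ^ (m + 1) * s ^ l by ring, ← mul_assoc, map_mul,
        map_mul _ _ (s ^ l), mul_right_comm]
      gcongr
      exact h1 N
  · obtain ⟨m, rfl⟩ := Nat.exists_eq_add_of_lt h
    rcases hL.valuation_gap_mul hι hinv (hs (m + 1) (by omega) (by omega)) (g.coeff l₀) hl0
      with h1 | h1
    · intro N
      rw [show s ^ (l₀ + m + 1) = s ^ (m + 1) * s ^ l₀ by ring, ← mul_assoc, map_mul,
        map_mul _ _ (s ^ l₀), mul_right_comm]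
      gcongr
      exact h1 N
    · refine absurd ?_ hno
      rw [show s ^ (l₀ + m + 1) = s ^ (m + 1) * s ^ l₀ by ring, ← mul_assoc, map_mul,
        map_mul _ _ (s ^ l₀), mul_right_comm]
      gcongr
      exact h1 1

theorem valuation_eval_sub_dominant_le {g : S[X]} {s : L} {l₀ : ℕ} {B : Γ}
    (h : ∀ l, l ≠ l₀ → v (j (g.coeff l) * s ^ l) ≤ B) :
    v ((g.map j).eval s - j (g.coeff l₀) * s ^ l₀) ≤ B := by
  have e : (g.map j).eval s - j (g.coeff l₀) * s ^ l₀ =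
      ((g - monomial l₀ (g.coeff l₀)).map j).eval s := by
    rw [Polynomial.map_sub, eval_sub, map_monomial, eval_monomial]
  rw [e, eval_eq_sum_range]
  refine v.map_sum_le fun l _ => ?_
  rw [coeff_map, coeff_sub, coeff_monomial]
  split_ifs with hl
  · subst hl; simp
  · rw [sub_zero]; exact h l (Ne.symm hl)

variable {L' Γ' : Type*} [Field L'] [LinearOrderedCommGroupWithZero Γ'] {i' : k →+* L'}
  {v' : Valuation L' Γ'} {j' : S →+* L'}

theorem exists_sameCoset_of_dominant [CharZero k] (hL : IsPadicLike i v π q P)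
    (hL' : IsPadicLike i' v' π q P)
    (hS : ∀ n, 0 < n → ∀ z, SameCoset i i' n (j z) (j' z)) {n : ℕ} (hn : 0 < n) :
    ∃ N : ℕ, ∀ (s : L) (s' : L') (g : S[X]) (l₀ : ℕ), SameCoset i i' n s s' →
      (∀ l, l ≠ l₀ → v (j (g.coeff l) * s ^ l) ≤ v (j (g.coeff l₀) * s ^ l₀) * v (i π) ^ N) →
      (∀ l, l ≠ l₀ →
        v' (j' (g.coeff l) * s' ^ l) ≤ v' (j' (g.coeff l₀) * s' ^ l₀) * v' (i' π) ^ N) →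
      SameCoset i i' n ((g.map j).eval s) ((g.map j').eval s') := by
  obtain ⟨N, hN⟩ := hL.exists_eq_mul_pow hn
  obtain ⟨N', hN'⟩ := hL'.exists_eq_mul_pow hn
  refine ⟨N + N', fun s s' g l₀ hs h h' => ?_⟩
  obtain ⟨y, hy, hy'⟩ := hN ((g.map j).eval s) (j (g.coeff l₀) * s ^ l₀)
    ((valuation_eval_sub_dominant_le h).trans (by gcongr 1; exact hL.pi_pow_le (by omega)))
  obtain ⟨z, hz, hz'⟩ := hN' ((g.map j').eval s') (j' (g.coeff l₀) * s' ^ l₀)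
    ((valuation_eval_sub_dominant_le h').trans (by gcongr 1; exact hL'.pi_pow_le (by omega)))
  rw [hy', hz']
  exact ((hS n hn _).mul (hs.pow l₀)).mul_pow hy hz

theorem exists_root_transfer_of_pow [CharZero k] (hL : IsPadicLike i v π q P)
    (hL' : IsPadicLike i' v' π q P) (hι : j.comp ι = i) (hι' : j'.comp ι = i')
    (hinv : ∀ x : S, x ≠ 0 → ∃ y, x * y = 1)
    (hS : ∀ n, 0 < n → ∀ z, SameCoset i i' n (j z) (j' z)) {d : ℕ}
    (hc : ∀ g : S[X], g ≠ 0 → g.natDegree < d → ∀ x, (g.map j).eval x = 0 → ∃ c, j c = x)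
    {r : L} {b : S} (hr : r ^ d = j b) (hd : 0 < d) (hvr : ∀ a, v (j a) ≠ v r)
    (G : Finset S[X]) (hG : ∀ g ∈ G, g.natDegree < d) {n : ℕ} (hn : 0 < n) :
    ∃ r' : L', r' ^ d = j' b ∧
      ∀ g ∈ G, SameCoset i i' n ((g.map j).eval r) ((g.map j').eval r') := by
  have hr0 : r ≠ 0 := fun h0 => hvr 0 (by rw [map_zero, h0])
  obtain ⟨N, hN⟩ := hL.exists_sameCoset_of_dominant hL' hS hn
  obtain ⟨lam, hlam, y, hy⟩ := hL.coset n hn r hr0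
  have hy0 : y ≠ 0 := fun h => hr0 (by rw [hy, h, zero_pow hn.ne', mul_zero])
  have hil : i lam ≠ 0 := (map_ne_zero i).2 hlam
  have hil' : i' lam ≠ 0 := (map_ne_zero i').2 hlam
  have h1 : ∃ y, y ^ (n * d) = j (b * ι (lam⁻¹ ^ d)) := by
    refine ⟨y, ?_⟩
    rw [map_mul, ← RingHom.comp_apply, hι, ← hr, hy, map_pow, map_inv₀, inv_pow]
    field_simp
    ring
  obtain ⟨y', hy'⟩ := (hL.exists_pow_eq_iff hL' (hS (n * d) (Nat.mul_pos hn hd) _)).1 h1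
  have hr' : (i' lam * y' ^ n) ^ d = j' b := by
    rw [mul_pow, ← pow_mul, hy', map_mul, ← RingHom.comp_apply, hι', map_pow, map_inv₀, inv_pow]
    field_simp
  have hjb : j b ≠ 0 := hr ▸ pow_ne_zero _ hr0
  have hjb' : j' b ≠ 0 := fun h => hjb ((hS 1 one_pos b).eq_zero_iff.2 h)
  have hy0' : y' ≠ 0 := fun h => hjb' (by
    rw [← hr', h, zero_pow hn.ne', mul_zero, zero_pow hd.ne'])
  have hsc : SameCoset i i' n r (i' lam * y' ^ n) := ⟨lam, y, y', hy0, hy0', hy, rfl⟩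
  refine ⟨_, hr', fun g hg => ?_⟩
  by_cases hg0 : g = 0
  · simpa [hg0] using SameCoset.map (i := i) (i' := i') (n := n) 0
  obtain ⟨l₀, -, hdom⟩ := hL.exists_dominant hι hinv hr0 hg0 fun m hm hmg a =>
    hL.valuation_pow_ne hι hc hvr hm (hmg.trans_lt (hG g hg)) a
  refine hN r _ g l₀ hsc (fun l hl => hdom l hl N) fun l hl => ?_
  have h2 := hdom l hl N
  set r' := i' lam * y' ^ n
  have e : ∀ l, (j (g.coeff l) * r ^ l) ^ d = j (g.coeff l ^ d * b ^ l) := fun l => by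
    rw [mul_pow, ← pow_mul, mul_comm l d, pow_mul, hr, map_mul, map_pow, map_pow]
  have e' : ∀ l, (j' (g.coeff l) * r' ^ l) ^ d = j' (g.coeff l ^ d * b ^ l) := fun l => by
    rw [mul_pow, ← pow_mul, mul_comm l d, pow_mul, hr', map_mul, map_pow, map_pow]
  have e1 : (i π ^ N) ^ d = j ((ι π ^ N) ^ d) := by
    rw [map_pow, map_pow, ← RingHom.comp_apply, hι]
  have e1' : (i' π ^ N) ^ d = j' ((ι π ^ N) ^ d) := by
    rw [map_pow, map_pow, ← RingHom.comp_apply, hι']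
  have e2 : v (j (g.coeff l ^ d * b ^ l)) ≤ v (j (g.coeff l₀ ^ d * b ^ l₀ * (ι π ^ N) ^ d)) := by
    rw [map_mul j _ ((ι π ^ N) ^ d), ← e, ← e, ← e1, ← mul_pow, map_pow v, map_pow v,
      map_mul v _ (i π ^ N), map_pow v (i π)]
    exact pow_le_pow_left' h2 d
  rw [hL.valuation_le_iff hL' hι hι' hS, map_mul j' _ ((ι π ^ N) ^ d), ← e', ← e', ← e1',
    ← mul_pow, map_pow v', map_pow v', map_mul v' _ (i' π ^ N), map_pow v' (i' π)] at e2
  exact (pow_le_pow_iff_left₀ zero_le zero_le hd.ne').1 e2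

end IsPadicLike

namespace IsPadicLike

variable {k L Γ L' Γ' S : Type*} [Field k] [Field L] [LinearOrderedCommGroupWithZero Γ]
    {i : k →+* L} {v : Valuation L Γ} {π : k} {q : ℕ} {P : ℕ → k → Prop}
    [Field L'] [LinearOrderedCommGroupWithZero Γ'] {i' : k →+* L'} {v' : Valuation L' Γ'}
    [CommRing S] {j' : S →+* L'} {ι : k →+* S} {j : S →+* L}

/-- An element can be transferred so that its coset and its position with respect to finitely many
values are preserved, up to finite precision. -/
theorem exists_sameCoset_cut (hL : IsPadicLike i v π q P)
    (hL' : IsPadicLike i' v' π q P) (hι : j.comp ι = i) (hι' : j'.comp ι = i')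
    (hS : ∀ n, 0 < n → ∀ z, SameCoset i i' n (j z) (j' z)) {s : L} {M n : ℕ} (hM : 0 < M)
    (hn : 0 < n) (hs : ∀ a, v (j a) ≠ v (s ^ M)) (X : Finset S) (N : ℕ) :
    ∃ s', SameCoset i i' n s s' ∧ ∀ x ∈ X,
      ((∀ N : ℕ, v (j x) ≤ v (s ^ M) * v (i π) ^ N) →
        v' (j' x) ≤ v' (s' ^ M) * v' (i' π) ^ N) ∧
      ((∀ N : ℕ, v (s ^ M) ≤ v (j x) * v (i π) ^ N) →
        v' (s' ^ M) ≤ v' (j' x) * v' (i' π) ^ N) := by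
  classical
  have hsM : v (s ^ M) ≠ 0 := fun h0 => hs 0 (by rw [map_zero, map_zero, h0])
  have hs0 : s ≠ 0 := fun h => hsM (by rw [h, zero_pow hM.ne', map_zero])
  have hnM : 0 < n * M := Nat.mul_pos hn hM
  have hπ := hL.ne_zero
  obtain ⟨lam, hlam, y, hy⟩ := hL.coset n hn s hs0
  have hy0 : y ≠ 0 := fun h => hs0 (by rw [hy, h, zero_pow hn.ne', mul_zero])
  have key : ∀ (D : S) (c μ : k) (y₁ : L) (y₁' : L'), c ≠ 0 → μ ≠ 0 → y₁' ≠ 0 →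
      j D = i c * y₁ ^ (n * M) → j' D = i' c * y₁' ^ (n * M) →
      (∀ x ∈ X,
      ((∀ N : ℕ, v (j x) ≤ v (s ^ M) * v (i π) ^ N) →
        v (j x) ≤ v (i (lam ^ M * μ ^ (n * M) / c)) * v (j D) * v (i π) ^ N) ∧
      ((∀ N : ℕ, v (s ^ M) ≤ v (j x) * v (i π) ^ N) →
        v (i (lam ^ M * μ ^ (n * M) / c)) * v (j D) ≤ v (j x) * v (i π) ^ N)) →
      ∃ s', SameCoset i i' n s s' ∧ ∀ x ∈ X,
      ((∀ N : ℕ, v (j x) ≤ v (s ^ M) * v (i π) ^ N) →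
        v' (j' x) ≤ v' (s' ^ M) * v' (i' π) ^ N) ∧
      ((∀ N : ℕ, v (s ^ M) ≤ v (j x) * v (i π) ^ N) →
        v' (s' ^ M) ≤ v' (j' x) * v' (i' π) ^ N) := by
    intro D c μ y₁ y₁' hc hμ hy₁' hD hD' hX
    have e : (i' lam * (i' μ * y₁') ^ n) ^ M = j' (ι (lam ^ M * μ ^ (n * M) / c) * D) := by
      rw [map_mul, hD', ← RingHom.comp_apply, hι', map_div₀, map_mul, map_pow, map_pow]
      have : i' c ≠ 0 := (map_ne_zero i').2 hc
      field_simp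
      ring
    have hp : ∀ N, (i π) ^ N = j (ι π ^ N) := fun N => by
      rw [map_pow, ← hι, RingHom.comp_apply]
    have hp' : ∀ N, (i' π) ^ N = j' (ι π ^ N) := fun N => by
      rw [map_pow, ← hι', RingHom.comp_apply]
    have hk : ∀ c, i c = j (ι c) := fun c => by rw [← hι, RingHom.comp_apply]
    refine ⟨i' lam * (i' μ * y₁') ^ n,
      ⟨lam, y, _, hy0, mul_ne_zero ((map_ne_zero i').2 hμ) hy₁', hy, rfl⟩,
      fun x hx => ⟨fun h => ?_, fun h => ?_⟩⟩
    · have := (hX x hx).1 h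
      rw [← map_pow v, hp, hk, ← map_mul, ← map_mul, ← map_mul, ← map_mul,
        hL.valuation_le_iff hL' hι hι' hS] at this
      rw [e, ← map_pow v', hp', ← map_mul, ← map_mul]
      exact this
    · have := (hX x hx).2 h
      rw [← map_pow v, hp, hk, ← map_mul, ← map_mul, ← map_mul, ← map_mul,
        hL.valuation_le_iff hL' hι hι' hS] at this
      rw [e, ← map_pow v', hp', ← map_mul, ← map_mul]
      exact this
  have hfin : ∀ (D : S) (c : k) (y₁ : L) (y₁' : L'), j D ≠ 0 →
      j D = i c * y₁ ^ (n * M) → j' D = i' c * y₁' ^ (n * M) → c ≠ 0 := by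
    intro D c y₁ y₁' h0 h1 _ hc
    rw [h1, hc, map_zero, zero_mul] at h0
    exact h0 rfl
  rcases hL.valuation_gap hι hs 1 with h1 | h1
  · obtain ⟨D, hD, hmin⟩ := Finset.exists_min_image
      (insert 1 (X.filter fun x => ∀ N : ℕ, v (s ^ M) ≤ v (j x) * v (i π) ^ N))
      (fun x => v (j x)) ⟨1, Finset.mem_insert_self _ _⟩
    have hsD : ∀ N : ℕ, v (s ^ M) ≤ v (j D) * v (i π) ^ N := by
      rcases Finset.mem_insert.1 hD with rfl | hD
      exacts [h1, (Finset.mem_filter.1 hD).2]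
    have hjD : j D ≠ 0 := fun h => hsM (le_zero_iff.1 (by simpa [h] using hsD 0))
    obtain ⟨c, y₁, y₁', -, hy₁', hcD, hcD'⟩ := hS (n * M) hnM D
    have hc := hfin D c y₁ y₁' hjD hcD hcD'
    obtain ⟨e, he⟩ := hL.exists_pow_le (c / lam ^ M) (div_ne_zero hc (pow_ne_zero _ hlam))
    have hκ0 : lam ^ M * (π ^ (e + N)) ^ (n * M) / c ≠ 0 :=
      div_ne_zero (mul_ne_zero (pow_ne_zero _ hlam) (pow_ne_zero _ (pow_ne_zero _ hπ))) hc
    have hκ : v (i (lam ^ M * (π ^ (e + N)) ^ (n * M) / c)) ≤ v (i π) ^ N := by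
      have h2 : v (i π) ^ e * v (i (lam ^ M / c)) ≤ 1 := by
        refine (mul_le_mul_left he _).trans ?_
        rw [← map_mul, ← map_mul, div_mul_div_cancel₀' , div_self, map_one, map_one]
        · exact pow_ne_zero _ hlam
        · exact hc
      have h3 : v (i (π ^ (e + N))) ^ (n * M) ≤ v (i π) ^ (e + N) := by
        rw [map_pow, map_pow]
        exact pow_le_of_le_one zero_le (hL.pi_pow_le_one _) hnM.ne'
      calc _ = v (i (lam ^ M / c)) * v (i (π ^ (e + N))) ^ (n * M) := by
            rw [mul_div_right_comm, map_mul, map_mul, map_pow i (π ^ (e + N)), map_pow v]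
        _ ≤ v (i (lam ^ M / c)) * v (i π) ^ (e + N) := by gcongr
        _ = v (i π) ^ e * v (i (lam ^ M / c)) * v (i π) ^ N := by rw [pow_add]; ac_rfl
        _ ≤ _ := mul_le_of_le_one_left' h2
    refine key D c (π ^ (e + N)) y₁ y₁' hc (pow_ne_zero _ hπ) hy₁' hcD hcD'
      fun x hx => ⟨fun h => ?_, fun h => ?_⟩
    · obtain ⟨E, hE⟩ := hL.exists_pow_le _ (mul_ne_zero hκ0 (pow_ne_zero N hπ))
      calc v (j x) ≤ v (s ^ M) * v (i π) ^ E := h E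
        _ ≤ v (j D) * v (i π) ^ 0 * v (i _) := mul_le_mul' (hsD 0) hE
        _ = _ := by rw [map_mul, map_mul, pow_zero, mul_one, map_pow i π, map_pow v]; ac_rfl
    · rw [mul_comm]
      exact mul_le_mul' (hmin x (Finset.mem_insert_of_mem (Finset.mem_filter.2 ⟨hx, h⟩))) hκ
  · obtain ⟨D, hD, hmax⟩ := Finset.exists_max_image
      (insert 1 (X.filter fun x => ∀ N : ℕ, v (j x) ≤ v (s ^ M) * v (i π) ^ N))
      (fun x => v (j x)) ⟨1, Finset.mem_insert_self _ _⟩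
    have hsD : ∀ N : ℕ, v (j D) ≤ v (s ^ M) * v (i π) ^ N := by
      rcases Finset.mem_insert.1 hD with rfl | hD
      exacts [h1, (Finset.mem_filter.1 hD).2]
    have hjD : j D ≠ 0 := fun h => by
      have := hmax 1 (Finset.mem_insert_self _ _)
      rw [h, map_zero, map_one, map_one] at this
      exact absurd this (by simp)
    obtain ⟨c, y₁, y₁', -, hy₁', hcD, hcD'⟩ := hS (n * M) hnM D
    have hc := hfin D c y₁ y₁' hjD hcD hcD'
    obtain ⟨e, he⟩ := hL.exists_pow_le (lam ^ M * π ^ N / c)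
      (div_ne_zero (mul_ne_zero (pow_ne_zero _ hlam) (pow_ne_zero _ hπ)) hc)
    have hμ : (π ^ e)⁻¹ ≠ 0 := inv_ne_zero (pow_ne_zero _ hπ)
    have hκ0 : lam ^ M * ((π ^ e)⁻¹) ^ (n * M) / c ≠ 0 :=
      div_ne_zero (mul_ne_zero (pow_ne_zero _ hlam) (pow_ne_zero _ hμ)) hc
    have hκ : 1 ≤ v (i (lam ^ M * ((π ^ e)⁻¹) ^ (n * M) / c)) * v (i π) ^ N := by
      have h3 : (v (i π) ^ e)⁻¹ ≤ v (i (π ^ e)⁻¹) ^ (n * M) := by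
        rw [map_inv₀, map_inv₀, map_pow, map_pow]
        exact le_self_pow₀ ((one_le_inv₀ (hL.pi_pow_pos e)).2 (hL.pi_pow_le_one e)) hnM.ne'
      calc 1 = v (i π) ^ e * (v (i π) ^ e)⁻¹ := (mul_inv_cancel₀ (hL.pi_pow_pos e).ne').symm
        _ ≤ v (i (lam ^ M * π ^ N / c)) * v (i (π ^ e)⁻¹) ^ (n * M) := mul_le_mul' he h3
        _ = _ := by
          rw [← map_pow v, ← map_pow v, ← map_mul, ← map_mul, ← map_pow i, ← map_pow i,
            ← map_mul, ← map_mul]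
          congr 2; ring
    refine key D c (π ^ e)⁻¹ y₁ y₁' hc hμ hy₁' hcD hcD' fun x hx => ⟨fun h => ?_, fun h => ?_⟩
    · rw [mul_right_comm]
      exact (hmax x (Finset.mem_insert_of_mem (Finset.mem_filter.2 ⟨hx, h⟩))).trans
        (le_mul_of_one_le_left' hκ)
    · obtain ⟨E, hE⟩ := hL.exists_pow_le _ (mul_ne_zero (inv_ne_zero hκ0) (pow_ne_zero N hπ))
      have hv0 : v (i (lam ^ M * ((π ^ e)⁻¹) ^ (n * M) / c)) ≠ 0 :=
        v.ne_zero_iff.2 ((map_ne_zero i).2 hκ0)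
      rw [map_mul, map_mul, map_inv₀, map_inv₀, map_pow, map_pow,
        ← div_eq_inv_mul, le_div_iff₀ (zero_lt_iff.2 hv0)] at hE
      calc _ ≤ v (i (lam ^ M * ((π ^ e)⁻¹) ^ (n * M) / c)) * (v (s ^ M) * v (i π) ^ 0) := by
            gcongr; exact hsD 0
        _ ≤ v (i (lam ^ M * ((π ^ e)⁻¹) ^ (n * M) / c)) * (v (j x) * v (i π) ^ E) := by
            rw [pow_zero, mul_one]; gcongr; exact h E
        _ = v (j x) * (v (i π) ^ E * v (i (lam ^ M * ((π ^ e)⁻¹) ^ (n * M) / c))) := by ac_rfl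
        _ ≤ _ := by gcongr

theorem exists_sameCoset_cuts (hL : IsPadicLike i v π q P)
    (hL' : IsPadicLike i' v' π q P) (hι : j.comp ι = i) (hι' : j'.comp ι = i')
    (hS : ∀ n, 0 < n → ∀ z, SameCoset i i' n (j z) (j' z)) {s : L} {n : ℕ}
    (hn : 0 < n) (hs : ∀ m, 0 < m → ∀ a, v (j a) ≠ v (s ^ m)) (X : Finset S) (d N : ℕ) :
    ∃ s', SameCoset i i' n s s' ∧ ∀ x ∈ X, ∀ m, 0 < m → m ≤ d →
      ((∀ N : ℕ, v (j x) ≤ v (s ^ m) * v (i π) ^ N) →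
        v' (j' x) ≤ v' (s' ^ m) * v' (i' π) ^ N) ∧
      ((∀ N : ℕ, v (s ^ m) ≤ v (j x) * v (i π) ^ N) →
        v' (s' ^ m) ≤ v' (j' x) * v' (i' π) ^ N) := by
  classical
  obtain ⟨s', hs', h⟩ := hL.exists_sameCoset_cut hL' hι hι' hS (Nat.factorial_pos d) hn
    (hs _ (Nat.factorial_pos d))
    ((X ×ˢ Finset.Icc 1 d).image fun x => x.1 ^ (d.factorial / x.2)) (N * d.factorial)
  refine ⟨s', hs', fun x hx m hm hmd => ?_⟩
  obtain ⟨K, hK⟩ := Nat.dvd_factorial hm hmd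
  have hK0 : K ≠ 0 := fun h => (Nat.factorial_pos d).ne' (by rw [hK, h, mul_zero])
  have h1 := h (x ^ K) (Finset.mem_image.2 ⟨(x, m), Finset.mem_product.2
    ⟨hx, Finset.mem_Icc.2 ⟨hm, hmd⟩⟩, by simp only; rw [hK, Nat.mul_div_cancel_left _ hm]⟩)
  have hpN : ∀ {p : Γ}, p ≤ 1 → ∀ N : ℕ, (p ^ N) ^ K ≤ p ^ N := fun hp N =>
    pow_le_of_le_one zero_le (pow_le_one' hp _) hK0
  have hpN' : v' (i' π) ^ (N * d.factorial) ≤ (v' (i' π) ^ N) ^ K := by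
    rw [← pow_mul]
    refine hL'.pi_pow_le (Nat.mul_le_mul_left N ?_)
    rw [hK]
    exact Nat.le_mul_of_pos_left _ hm
  have e' : v (s ^ d.factorial) = v (s ^ m) ^ K := by rw [hK, pow_mul, map_pow v]
  have e'' : v' (s' ^ d.factorial) = v' (s' ^ m) ^ K := by rw [hK, pow_mul, map_pow v']
  rw [e', e'', map_pow j, map_pow j', map_pow v, map_pow v'] at h1
  refine ⟨fun h2 => ?_, fun h2 => ?_⟩
  · rw [← pow_le_pow_iff_left₀ zero_le zero_le hK0, mul_pow]
    refine (h1.1 fun N => ?_).trans (by gcongr)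
    refine (pow_le_pow_left' (h2 N) K).trans ?_
    rw [mul_pow]
    gcongr 1
    exact hpN hL.lt_one.le N
  · rw [← pow_le_pow_iff_left₀ zero_le zero_le hK0, mul_pow]
    refine (h1.2 fun N => ?_).trans (by gcongr)
    refine (pow_le_pow_left' (h2 N) K).trans ?_
    rw [mul_pow]
    gcongr 1
    exact hpN hL.lt_one.le N

theorem exists_transfer_of_gap [CharZero k] (hL : IsPadicLike i v π q P)
    (hL' : IsPadicLike i' v' π q P) (hι : j.comp ι = i) (hι' : j'.comp ι = i')
    (hinv : ∀ x : S, x ≠ 0 → ∃ y, x * y = 1)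
    (hS : ∀ n, 0 < n → ∀ z, SameCoset i i' n (j z) (j' z)) {s : L}
    (hs : ∀ m, 0 < m → ∀ a, v (j a) ≠ v (s ^ m)) (G : Finset S[X]) {n : ℕ} (hn : 0 < n) :
    ∃ s', ∀ g ∈ G, SameCoset i i' n ((g.map j).eval s) ((g.map j').eval s') := by
  classical
  have hs0 : s ≠ 0 := fun h => hs 1 one_pos 0 (by rw [map_zero, h, pow_one])
  obtain ⟨N, hN⟩ := hL.exists_sameCoset_of_dominant hL' hS hn
  have : Nontrivial S := j.domain_nontrivial
  choose! inv hinv' using hinv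
  set d := G.sup natDegree
  obtain ⟨s', hs', h⟩ := hL.exists_sameCoset_cuts hL' hι hι' hS hn hs
    (G.biUnion fun g => Finset.image₂ (fun l l' => g.coeff l * inv (g.coeff l'))
      (Finset.range (d + 1)) (Finset.range (d + 1))) d N
  refine ⟨s', fun g hg => ?_⟩
  by_cases hg0 : g = 0
  · simpa [hg0] using SameCoset.map (i := i) (i' := i') (n := n) 0
  obtain ⟨l₀, hl₀, hdom⟩ := hL.exists_dominant hι (fun x hx => ⟨_, hinv' x hx⟩) hs0 hg0
    fun m hm _ a => hs m hm a
  refine hN s s' g l₀ hs' (fun l hl => hdom l hl N) fun l hl => ?_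
  by_cases hl0 : g.coeff l = 0
  · simp [hl0]
  have hd : g.natDegree ≤ d := Finset.le_sup hg
  have hld := (le_natDegree_of_ne_zero hl0).trans hd
  have hld₀ := (le_natDegree_of_ne_zero hl₀).trans hd
  have hmem : ∀ l l', l ≤ d → l' ≤ d → g.coeff l * inv (g.coeff l') ∈
      (G.biUnion fun g => Finset.image₂ (fun l l' => g.coeff l * inv (g.coeff l'))
      (Finset.range (d + 1)) (Finset.range (d + 1))) := fun l l' hl hl' =>
    Finset.mem_biUnion.2 ⟨g, hg, Finset.mem_image₂.2
      ⟨l, Finset.mem_range.2 (by omega), l', Finset.mem_range.2 (by omega), rfl⟩⟩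
  have hcancel : ∀ l l', g.coeff l' ≠ 0 →
      g.coeff l = g.coeff l' * (g.coeff l * inv (g.coeff l')) := fun l l' h => by
    rw [mul_left_comm, hinv' _ h, mul_one]
  have hpos : ∀ {l}, g.coeff l ≠ 0 → 0 < v (j (g.coeff l)) := fun h =>
    zero_lt_iff.2 (v.ne_zero_iff.2 ((map_ne_zero_iff j
      (injective_of_sameCoset fun x hx => ⟨_, hinv' x hx⟩)).2 h))
  have hspos : ∀ l, 0 < v (s ^ l) := fun l => zero_lt_iff.2 (v.ne_zero_iff.2 (pow_ne_zero _ hs0))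
  rcases lt_or_gt_of_ne hl with hlt | hlt
  · obtain ⟨m, rfl⟩ := Nat.exists_eq_add_of_lt hlt
    have h1 := (h _ (hmem l (l + m + 1) hld hld₀) (m + 1) (by omega) (by omega)).1 fun N => by
      have h2 := hdom l hl N
      rw [hcancel l _ hl₀, show s ^ (l + m + 1) = s ^ (m + 1) * s ^ l by ring] at h2
      refine le_of_mul_le_mul_left ?_ (mul_pos (hpos hl₀) (hspos l))
      simpa only [map_mul, mul_assoc, mul_left_comm, mul_comm] using h2
    rw [hcancel l _ hl₀, show s' ^ (l + m + 1) = s' ^ (m + 1) * s' ^ l by ring]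
    have := mul_le_mul_right h1 (v' (j' (g.coeff (l + m + 1))) * v' (s' ^ l))
    simpa only [map_mul, mul_assoc, mul_left_comm, mul_comm] using this
  · obtain ⟨m, rfl⟩ := Nat.exists_eq_add_of_lt hlt
    have h1 := (h _ (hmem l₀ (l₀ + m + 1) hld₀ hld) (m + 1) (by omega) (by omega)).2 fun N => by
      have h2 := hdom _ hl N
      rw [hcancel l₀ _ hl0, show s ^ (l₀ + m + 1) = s ^ (m + 1) * s ^ l₀ by ring] at h2
      refine le_of_mul_le_mul_left ?_ (mul_pos (hpos hl0) (hspos l₀))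
      simpa only [map_mul, mul_assoc, mul_left_comm, mul_comm] using h2
    rw [hcancel l₀ _ hl0, show s' ^ (l₀ + m + 1) = s' ^ (m + 1) * s' ^ l₀ by ring]
    have := mul_le_mul_right h1 (v' (j' (g.coeff (l₀ + m + 1))) * v' (s' ^ l₀))
    simpa only [map_mul, mul_assoc, mul_left_comm, mul_comm] using this

end IsPadicLike

/-- A subring of `L × L'` containing `k` all of whose elements have matching power cosets. -/
def IsMatching {k L L' : Type*} [Field k] [Field L] [Field L'] (i : k →+* L) (i' : k →+* L')
    (M : Subring (L × L')) : Prop :=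
  (∀ c, (i c, i' c) ∈ M) ∧ ∀ n, 0 < n → ∀ z ∈ M, SameCoset i i' n z.1 z.2

namespace IsMatching

variable {k L L' : Type*} [Field k] [Field L] [Field L'] {i : k →+* L} {i' : k →+* L'}
  {M : Subring (L × L')}

theorem exists_maximal (hM : IsMatching i i' M) :
    ∃ N, M ≤ N ∧ Maximal (IsMatching i i') N := by
  refine zorn_le_nonempty₀ {N | IsMatching i i' N} (fun c hc hchain y hy => ?_) M hM
  have hmem : ∀ x, x ∈ sSup c ↔ ∃ s ∈ c, x ∈ s := fun x =>
    Subring.mem_sSup_of_directedOn ⟨y, hy⟩ hchain.directedOn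
  refine ⟨sSup c, ⟨fun a => (hmem _).2 ⟨y, hy, (hc hy).1 a⟩, fun n hn z hz => ?_⟩,
    fun z hz => le_sSup hz⟩
  obtain ⟨s, hs, hzs⟩ := (hmem z).1 hz
  exact (hc hs).2 n hn z hzs

theorem exists_mul_eq_one (hM : Maximal (IsMatching i i') M) (z : M) (hz : z ≠ 0) :
    ∃ w, z * w = 1 := by
  have h0 := (hM.prop.2 1 one_pos z z.2).eq_zero_iff
  have h1 : z.1.1 ≠ 0 := fun h => hz (Subtype.ext (Prod.ext h (h0.1 h)))
  have h2 : z.1.2 ≠ 0 := fun h => h1 (h0.2 h)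
  let N : Subring (L × L') :=
    { carrier := {x | ∃ l : ℕ, x * z.1 ^ l ∈ M}
      mul_mem' := by
        rintro a b ⟨l, hl⟩ ⟨m, hm⟩
        exact ⟨l + m, by rw [pow_add, mul_mul_mul_comm]; exact mul_mem hl hm⟩
      one_mem' := ⟨0, by simp⟩
      add_mem' := by
        rintro a b ⟨l, hl⟩ ⟨m, hm⟩
        refine ⟨l + m, ?_⟩
        rw [show (a + b) * z.1 ^ (l + m) = a * z.1 ^ l * z.1 ^ m + b * z.1 ^ m * z.1 ^ l by ring]
        exact add_mem (mul_mem hl (pow_mem z.2 _)) (mul_mem hm (pow_mem z.2 _))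
      zero_mem' := ⟨0, by simp⟩
      neg_mem' := by
        rintro a ⟨l, hl⟩
        exact ⟨l, by rw [neg_mul]; exact neg_mem hl⟩ }
  have hMN : M ≤ N := fun x hx => ⟨0, by simpa using hx⟩
  have hN : IsMatching i i' N := by
    refine ⟨fun c => hMN (hM.prop.1 c), ?_⟩
    rintro n hn x ⟨l, hl⟩
    have := (hM.prop.2 n hn _ hl).mul ((hM.prop.2 n hn z z.2).inv.pow l)
    simp only [Prod.fst_mul, Prod.snd_mul, Prod.pow_fst, Prod.pow_snd] at this
    rwa [mul_assoc, ← mul_pow, mul_inv_cancel₀ h1, one_pow, mul_one, mul_assoc, ← mul_pow,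
      mul_inv_cancel₀ h2, one_pow, mul_one] at this
  have hw : (z.1.1⁻¹, z.1.2⁻¹) ∈ N := ⟨1, by
    have : ((z.1.1⁻¹, z.1.2⁻¹) : L × L') * z.1 ^ 1 = 1 := by
      ext <;> simp [h1, h2]
    rw [this]; exact one_mem M⟩
  refine ⟨⟨_, hM.le_of_ge hN hMN hw⟩, Subtype.ext (Prod.ext ?_ ?_)⟩ <;> simp [h1, h2]

theorem mem_of_forall (hM : Maximal (IsMatching i i') M) {t : L × L'}
    (ht : ∀ n, 0 < n → ∀ g : M[X], SameCoset i i' n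
      ((g.map ((RingHom.fst L L').comp M.subtype)).eval t.1)
      ((g.map ((RingHom.snd L L').comp M.subtype)).eval t.2)) : t ∈ M := by
  have hMN : M ≤ (eval₂RingHom M.subtype t).range := fun x hx =>
    ⟨C ⟨x, hx⟩, by simp⟩
  refine hM.le_of_ge (y := (eval₂RingHom M.subtype t).range) ⟨fun c => hMN (hM.prop.1 c), ?_⟩ hMN
    ⟨X, by simp⟩
  rintro n hn - ⟨g, rfl⟩
  have := ht n hn g
  rw [eval_map, eval_map, ← RingHom.coe_fst, ← RingHom.coe_snd, ← hom_eval₂, ← hom_eval₂] at this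
  exact this

/-- A root that can be transferred compatibly with finitely many cosets at a time already belongs
to a maximal matching subring. -/
theorem exists_eq_of_root (hM : Maximal (IsMatching i i') M) {f : M[X]} (hf : f.Monic) {t : L}
    (hft : (f.map ((RingHom.fst L L').comp M.subtype)).eval t = 0)
    (H : ∀ (G : Finset M[X]), (∀ g ∈ G, g.natDegree < f.natDegree) → ∀ n, 0 < n →
      ∃ t', (f.map ((RingHom.snd L L').comp M.subtype)).eval t' = 0 ∧ ∀ g ∈ G,
        SameCoset i i' n ((g.map ((RingHom.fst L L').comp M.subtype)).eval t)
          ((g.map ((RingHom.snd L L').comp M.subtype)).eval t')) :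
    ∃ z : M, z.1.1 = t := by
  classical
  set j := (RingHom.fst L L').comp M.subtype
  set j' := (RingHom.snd L L').comp M.subtype
  have hf1 : f ≠ 1 := by rintro rfl; simp at hft
  have hroot : ∀ t', t' ∈ (f.map j').roots.toFinset ↔ (f.map j').eval t' = 0 := fun t' => by
    rw [Multiset.mem_toFinset, mem_roots (hf.map j').ne_zero]; rfl
  have key : ∃ t', (f.map j').eval t' = 0 ∧ ∀ n, 0 < n → ∀ g : M[X], g.natDegree < f.natDegree →
      SameCoset i i' n ((g.map j).eval t) ((g.map j').eval t') := by
    by_contra! hcon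
    choose! n hn g hg hng using hcon
    obtain ⟨t', ht', hG⟩ := H ((f.map j').roots.toFinset.image g) (by
      intro g' hg'
      obtain ⟨x, hx, rfl⟩ := Finset.mem_image.1 hg'
      exact hg x ((hroot x).1 hx)) (∏ x ∈ (f.map j').roots.toFinset, n x)
      (Finset.prod_pos fun x hx => hn x ((hroot x).1 hx))
    have hmem := (hroot t').2 ht'
    exact hng t' ht' ((hG _ (Finset.mem_image_of_mem g hmem)).of_dvd
      (Finset.dvd_prod_of_mem n hmem))
  obtain ⟨t', ht', hall⟩ := key
  refine ⟨⟨(t, t'), mem_of_forall hM fun n hn g => ?_⟩, rfl⟩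
  have hlt := natDegree_modByMonic_lt g hf hf1
  have h := hall n hn _ hlt
  have e := modByMonic_add_div g f
  rw [← e, Polynomial.map_add, Polynomial.map_add, Polynomial.map_mul, Polynomial.map_mul,
    eval_add, eval_add, eval_mul, eval_mul]
  change SameCoset i i' n (_ + (f.map j).eval t * _) (_ + (f.map j').eval t' * _)
  rw [hft, ht', zero_mul, zero_mul, add_zero, add_zero]
  exact h

end IsMatching

namespace IsPadicLike

variable {k L Γ L' Γ' : Type*} [Field k] [CharZero k] [Field L] [LinearOrderedCommGroupWithZero Γ]
    {i : k →+* L} {v : Valuation L Γ} {π : k} {q : ℕ} {P : ℕ → k → Prop}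
    [Field L'] [LinearOrderedCommGroupWithZero Γ'] {i' : k →+* L'} {v' : Valuation L' Γ'}

theorem exists_eq_of_isMatching (hL : IsPadicLike i v π q P)
    (hL' : IsPadicLike i' v' π q P) {M : Subring (L × L')} (hM : Maximal (IsMatching i i') M)
    (g : M[X]) (hg : g ≠ 0) (x : L)
    (hx : (g.map ((RingHom.fst L L').comp M.subtype)).eval x = 0) :
    ∃ c, (RingHom.fst L L').comp M.subtype c = x := by
  obtain ⟨d, hd⟩ : ∃ d, g.natDegree = d := ⟨_, rfl⟩
  induction d using Nat.strong_induction_on generalizing g x with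
  | _ d ih =>
  set j := (RingHom.fst L L').comp M.subtype with hj_def
  set j' := (RingHom.snd L L').comp M.subtype with hj'_def
  let ι : k →+* M := (i.prod i').codRestrict M hM.prop.1
  have hι : j.comp ι = i := rfl
  have hι' : j'.comp ι = i' := rfl
  have hinv := IsMatching.exists_mul_eq_one hM
  have hS : ∀ n, 0 < n → ∀ z, SameCoset i i' n (j z) (j' z) := fun n hn z =>
    hM.prop.2 n hn z z.2
  have hj : Function.Injective j := injective_of_sameCoset hinv
  have hc : ∀ g : M[X], g ≠ 0 → g.natDegree < d → ∀ x, (g.map j).eval x = 0 → ∃ c, j c = x :=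
    fun g hg hgd x hx => ih _ hgd g hg x hx rfl
  by_contra! hxn
  obtain ⟨w, hw⟩ := hinv _ (leadingCoeff_ne_zero.2 hg)
  have hw0 : w ≠ 0 := by rintro rfl; simp at hw
  set f := g * C w with hf_def
  have hf : f.Monic := by
    have : IsDomain M := hj.isDomain j
    rw [Monic, hf_def, leadingCoeff_mul, leadingCoeff_C, hw]
  have hfd : f.natDegree = d := by
    have : IsDomain M := hj.isDomain j
    rw [hf_def, natDegree_mul_C hw0, hd]
  have hfx : (f.map j).eval x = 0 := by
    rw [hf_def, Polynomial.map_mul, eval_mul, hx, zero_mul]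
  by_cases hv : ∀ c, ∃ s, v (j s) = v (x - j c)
  · obtain ⟨z, hz⟩ := IsMatching.exists_eq_of_root hM hf hfx fun G hG n hn =>
      hL.exists_root_transfer_of_near hL' hι hι' hS hj hf (hfd ▸ hc) hfx hxn hv G hG hn
    exact hxn z hz
  · push Not at hv
    obtain ⟨c, hcv⟩ := hv
    have hs0 : x - j c ≠ 0 := sub_ne_zero.2 (hxn c).symm
    have hdom : ¬ ∀ m, 0 < m → m ≤ (taylor c f).natDegree → ∀ a, v (j a) ≠ v ((x - j c) ^ m) := by
      intro hno
      obtain ⟨l₀, hl₀, hdom⟩ := hL.exists_dominant hι hinv hs0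
        (g := taylor c f) (by rw [Ne, taylor_eq_zero]; exact hf.ne_zero) hno
      have h1 := valuation_eval_sub_dominant_le (j := j) (v := v) fun l hl => hdom l hl 1
      have h2 : ((taylor c f).map j).eval (x - j c) = 0 := by
        rw [map_taylor, taylor_eval, sub_add_cancel, hfx]
      rw [h2, zero_sub, Valuation.map_neg, pow_one] at h1
      refine absurd h1 (not_le.2 (mul_lt_of_lt_one_right (zero_lt_iff.2 ?_) hL.lt_one))
      exact v.ne_zero_iff.2 (mul_ne_zero ((map_ne_zero_iff j hj).2 hl₀) (pow_ne_zero _ hs0))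
    push Not at hdom
    obtain ⟨m, hm, hmd, a, ha⟩ := hdom
    rw [natDegree_taylor, hfd] at hmd
    rcases hmd.lt_or_eq with hmd | rfl
    · exact hL.valuation_pow_ne hι hc hcv hm hmd a ha
    · obtain ⟨b, r, hr, hrv⟩ := hL.exists_pow_eq_of_valuation_pow_eq hι hs0 hm ha
      have : Nontrivial M := j.domain_nontrivial
      obtain ⟨z, hz⟩ := IsMatching.exists_eq_of_root hM (monic_X_pow_sub_C b hm.ne') (t := r)
        (by
          rw [Polynomial.map_sub, Polynomial.map_pow, map_X, map_C, eval_sub, eval_pow, eval_X,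
            eval_C, sub_eq_zero]
          exact hr) fun G hG n hn => by
          rw [natDegree_X_pow_sub_C] at hG
          obtain ⟨r', hr', h⟩ := hL.exists_root_transfer_of_pow hL' hι hι' hinv hS hc hr hm
            (fun a => hrv ▸ hcv a) G hG hn
          exact ⟨r', by
          rw [Polynomial.map_sub, Polynomial.map_pow, map_X, map_C, eval_sub, eval_pow, eval_X,
            eval_C, sub_eq_zero]
          exact hr', h⟩
      exact hcv z (by rw [← hrv, ← hz]; rfl)

/-- The back-and-forth step: an element of `L` can be matched by an element of `L'`, compatibly
with the power cosets of the values of finitely many polynomials. -/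
theorem exists_transfer (hL : IsPadicLike i v π q P)
    (hL' : IsPadicLike i' v' π q P) {R : Type*} [CommRing R] (φ : R →+* L) (φ' : R →+* L')
    (ι : k →+* R) (hι : φ.comp ι = i) (hι' : φ'.comp ι = i')
    (hφ : ∀ n, 0 < n → ∀ r, SameCoset i i' n (φ r) (φ' r)) (G : Finset R[X]) {n : ℕ} (hn : 0 < n)
    (t : L) :
    ∃ t', ∀ g ∈ G, SameCoset i i' n ((g.map φ).eval t) ((g.map φ').eval t') := by
  classical
  have hR : IsMatching i i' (φ.prod φ').range := by
    refine ⟨fun c => ⟨ι c, by rw [← hι, ← hι']; rfl⟩, ?_⟩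
    rintro n hn - ⟨r, rfl⟩
    exact hφ n hn r
  obtain ⟨M, hRM, hM⟩ := hR.exists_maximal
  set j := (RingHom.fst L L').comp M.subtype with hj_def
  set j' := (RingHom.snd L L').comp M.subtype with hj'_def
  let ι₁ : k →+* M := (i.prod i').codRestrict M hM.prop.1
  have hι₁ : j.comp ι₁ = i := rfl
  have hι₁' : j'.comp ι₁ = i' := rfl
  let ψ : R →+* M := (φ.prod φ').codRestrict M fun r => hRM ⟨r, rfl⟩
  have hψ : ∀ g : R[X], g.map φ = (g.map ψ).map j := fun g => by rw [Polynomial.map_map]; rfl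
  have hψ' : ∀ g : R[X], g.map φ' = (g.map ψ).map j' := fun g => by rw [Polynomial.map_map]; rfl
  have hinv := IsMatching.exists_mul_eq_one hM
  have hS : ∀ n, 0 < n → ∀ z, SameCoset i i' n (j z) (j' z) := fun n hn z =>
    hM.prop.2 n hn z z.2
  have hj : Function.Injective j := injective_of_sameCoset hinv
  have hc := hL.exists_eq_of_isMatching hL' hM
  simp only [hψ, hψ']
  by_cases ht : ∃ z, j z = t
  · obtain ⟨z, rfl⟩ := ht
    refine ⟨j' z, fun g _ => ?_⟩
    rw [eval_map_apply, eval_map_apply]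
    exact hS n hn _
  push Not at ht
  by_cases hv : ∀ c, ∃ s, v (j s) = v (t - j c)
  · obtain ⟨t', h⟩ := hL.exists_transfer_of_near hL' hι₁ hι₁' hS hj
      (d := (G.image (map ψ)).sup natDegree + 1) (fun g hg _ x hx => hc g hg x hx) ht hv
      (G.image (map ψ)) (fun g hg => Nat.lt_succ_of_le (Finset.le_sup hg)) hn
    exact ⟨t', fun g hg => h _ (Finset.mem_image_of_mem _ hg)⟩
  · push Not at hv
    obtain ⟨c, hcv⟩ := hv
    obtain ⟨s', h⟩ := hL.exists_transfer_of_gap hL' hι₁ hι₁' hinv hS (s := t - j c)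
      (fun m hm a => hL.valuation_pow_ne (d := m + 1) hι₁ (fun g hg _ x hx => hc g hg x hx) hcv hm
        (Nat.lt_succ_self m) a)
      (G.image fun g => taylor c (g.map ψ)) hn
    refine ⟨s' + j' c, fun g hg => ?_⟩
    have := h _ (Finset.mem_image_of_mem _ hg)
    rwa [map_taylor, map_taylor, taylor_eval, taylor_eval, sub_add_cancel] at this

end IsPadicLike

section Ultrapower

open Filter

variable {X K : Type*} [Field K] {U : Ultrafilter X}

theorem Filter.Germ.exists_pow_eq_coe_iff {n : ℕ} {f : X → K} :
    (∃ y : (U : Filter X).Germ K, y ^ n = f) ↔ ∀ᶠ x in U, ∃ y, y ^ n = f x := by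
  constructor
  · rintro ⟨y, hy⟩
    induction y using Germ.inductionOn with | h y => ?_
    rw [← Germ.coe_pow, Germ.coe_eq] at hy
    filter_upwards [hy] with x hx using ⟨y x, hx⟩
  · intro h
    choose! y hy using fun x (hx : ∃ y, y ^ n = f x) => hx
    refine ⟨(y : (U : Filter X).Germ K), ?_⟩
    rw [← Germ.coe_pow, Germ.coe_eq]
    filter_upwards [h] with x hx using hy x hx

variable {Γ : Type*} [LinearOrderedCommGroupWithZero Γ] (v : Valuation K Γ)

variable (U) in
/-- The valuation ring of the ultrapower of a valued field. -/
noncomputable def germValuationSubring : ValuationSubring ((U : Filter X).Germ K) where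
  carrier := {f | f.LiftPred fun a => v a ≤ 1}
  mul_mem' {f g} := Germ.inductionOn₂ f g fun f g hf hg => by
    filter_upwards [hf, hg] with x hf hg
    exact (map_mul v _ _).trans_le (mul_le_one' hf hg)
  add_mem' {f g} := Germ.inductionOn₂ f g fun f g hf hg => by
    filter_upwards [hf, hg] with x hf hg using (v.map_add _ _).trans (max_le hf hg)
  neg_mem' {f} := Germ.inductionOn f fun f hf => by
    filter_upwards [hf] with x hf using (v.map_neg _).trans_le hf
  one_mem' := Eventually.of_forall fun x => (map_one v).le
  zero_mem' := Eventually.of_forall fun x => (map_zero v).trans_le zero_le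
  mem_or_inv_mem' f := Germ.inductionOn f fun f => by
    refine Ultrafilter.eventually_or.1 (Eventually.of_forall fun x => ?_)
    rcases le_total (v (f x)) 1 with h | h
    · exact Or.inl h
    · exact Or.inr (by simpa using inv_le_one_of_one_le₀ h)

theorem germValuation_le_iff {f g : X → K} :
    (germValuationSubring U v).valuation f ≤ (germValuationSubring U v).valuation g ↔
      ∀ᶠ x in U, v (f x) ≤ v (g x) := by
  rw [ValuationSubring.valuation_le_iff]
  constructor
  · rintro ⟨⟨a, ha : a.LiftPred fun a => v a ≤ 1⟩, h⟩
    induction a using Germ.inductionOn with | h a => ?_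
    rw [← Germ.coe_mul, Germ.coe_eq] at h
    filter_upwards [h, Germ.liftPred_coe.1 ha] with x hx ha
    rw [← hx, Pi.mul_apply, map_mul]
    exact mul_le_of_le_one_left' ha
  · intro h
    refine ⟨⟨((f / g : X → K) : (U : Filter X).Germ K), ?_⟩, ?_⟩
    · filter_upwards [h] with x hx
      rw [Pi.div_apply, map_div₀]
      exact div_le_one_of_le₀ hx zero_le
    · rw [← Germ.coe_mul, Germ.coe_eq]
      filter_upwards [h] with x hx
      by_cases hg : g x = 0
      · rw [hg, map_zero, le_zero_iff, Valuation.zero_iff] at hx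
        simp [hg, hx]
      · simp [hg]

theorem germValuation_lt_iff {f g : X → K} :
    (germValuationSubring U v).valuation f < (germValuationSubring U v).valuation g ↔
      ∀ᶠ x in U, v (f x) < v (g x) := by
  simp_rw [← not_le, Ultrafilter.eventually_not, germValuation_le_iff]

variable {k : Type*} [Field k] {i : k →+* K} {v} {π : k} {q : ℕ} {P : ℕ → k → Prop}

theorem IsPadicLike.germ (hK : IsPadicLike i v π q P)
    (happ : ∀ N : ℕ, ∃ S : Finset k, ∀ u, v u ≤ 1 → ∃ r ∈ S, v (u - i r) ≤ v (i π) ^ N)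
    (hcos : ∀ n : ℕ, 0 < n → ∃ S : Finset k, 0 ∉ S ∧ ∀ x, x ≠ 0 → ∃ a ∈ S, ∃ y, x = i a * y ^ n) :
    IsPadicLike ((Germ.coeRingHom (U : Filter X)).comp (RingHom.pi fun _ => i))
      (germValuationSubring U v).valuation π q P where
  hensel h h0 h1 hj := by
    obtain ⟨g, rfl⟩ := Polynomial.map_surjective (Germ.coeRingHom (U : Filter X))
      Quotient.mk_surjective h
    simp only [coeff_map] at h0 h1 hj
    have hev : ∀ᶠ x in U, (g.map (Pi.evalRingHom (fun _ => K) x)).coeff 0 = 1 ∧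
        (g.map (Pi.evalRingHom (fun _ => K) x)).coeff 1 = 1 ∧
        ∀ j, 2 ≤ j → v ((g.map (Pi.evalRingHom (fun _ => K) x)).coeff j) < 1 := by
      have h2 : ∀ᶠ x in U, ∀ j ∈ Finset.Icc 2 g.natDegree, v (g.coeff j x) < 1 := by
        rw [eventually_all_finset]
        intro j hj'
        have := hj j (Finset.mem_Icc.1 hj').1
        rw [← map_one (germValuationSubring U v).valuation, ← Germ.coe_one] at this
        simpa using (germValuation_lt_iff v).1 this
      filter_upwards [Germ.coe_eq.1 h0, Germ.coe_eq.1 h1, h2] with x hx0 hx1 hx2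
      simp only [coeff_map]
      refine ⟨hx0, hx1, fun j hj => ?_⟩
      by_cases hjd : j ≤ g.natDegree
      · exact hx2 j (Finset.mem_Icc.2 ⟨hj, hjd⟩)
      · rw [coeff_eq_zero_of_natDegree_lt (not_le.1 hjd)]
        simp
    choose! z hz using fun x (hx : (g.map (Pi.evalRingHom (fun _ => K) x)).coeff 0 = 1 ∧
        (g.map (Pi.evalRingHom (fun _ => K) x)).coeff 1 = 1 ∧
        ∀ j, 2 ≤ j → v ((g.map (Pi.evalRingHom (fun _ => K) x)).coeff j) < 1) =>
      hK.hensel _ hx.1 hx.2.1 hx.2.2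
    refine ⟨Germ.coeRingHom _ z, ?_, ?_⟩
    · rw [eval_map_apply, ← map_zero (Germ.coeRingHom (U : Filter X))]
      refine Germ.coe_eq.2 ?_
      filter_upwards [hev] with x hx
      have := (hz x hx).1
      rwa [show z x = Pi.evalRingHom (fun _ => K) x z from rfl, eval_map_apply] at this
    · rw [← map_one (germValuationSubring U v).valuation, ← Germ.coe_one]
      refine (germValuation_le_iff v).2 ?_
      filter_upwards [hev] with x hx
      simpa using (hz x hx).2
  approx u hu N := by
    induction u using Germ.inductionOn with | h u => ?_
    rw [← map_one (germValuationSubring U v).valuation, ← Germ.coe_one, germValuation_le_iff] at hu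
    obtain ⟨S, hS⟩ := happ N
    have : ∀ᶠ x in U, ∃ r ∈ (S : Set k), v (u x - i r) ≤ v (i π) ^ N := by
      filter_upwards [hu] with x hx using hS _ (by simpa using hx)
    obtain ⟨r, -, hr⟩ := (Ultrafilter.eventually_exists_mem_iff S.finite_toSet).1 this
    refine ⟨r, ?_⟩
    rw [← map_pow]
    refine (germValuation_le_iff (f := u - fun _ => i r) (g := (fun _ => i π) ^ N) v).2 ?_
    filter_upwards [hr] with x hx
    simpa using hx
  coset n hn u hu := by
    induction u using Germ.inductionOn with | h u => ?_
    obtain ⟨S, hS0, hS⟩ := hcos n hn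
    have hu' : ∀ᶠ x in U, u x ≠ 0 := by
      rw [Ultrafilter.eventually_not]
      exact fun h => hu (Germ.coe_eq.2 h)
    have : ∀ᶠ x in U, ∃ r ∈ (S : Set k), ∃ y, u x = i r * y ^ n := by
      filter_upwards [hu'] with x hx using hS _ hx
    obtain ⟨r, hr, hr'⟩ := (Ultrafilter.eventually_exists_mem_iff S.finite_toSet).1 this
    refine ⟨r, fun h => hS0 (h ▸ hr), ?_⟩
    choose! y hy using fun x (hx : ∃ y, u x = i r * y ^ n) => hx
    refine ⟨(y : (U : Filter X).Germ K), ?_⟩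
    refine (Germ.coe_eq (f := u) (g := (fun _ => i r) * y ^ n)).2 ?_
    filter_upwards [hr'] with x hx using hy x hx
  le_one_iff u := by
    induction u using Germ.inductionOn with | h u => ?_
    rw [← map_one (germValuationSubring U v).valuation, ← Germ.coe_one, germValuation_le_iff]
    refine Iff.trans ?_ (Germ.exists_pow_eq_coe_iff (f := 1 + (fun _ => i π) * u ^ q)).symm
    refine eventually_congr (Eventually.of_forall fun x => ?_)
    simpa using hK.le_one_iff (u x)
  exists_pow_le a ha := by
    obtain ⟨e, he⟩ := hK.exists_pow_le a ha
    refine ⟨e, ?_⟩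
    rw [← map_pow]
    refine (germValuation_le_iff (f := (fun _ => i π) ^ e) (g := fun _ => i a) v).2 ?_
    exact Eventually.of_forall fun x => by simpa using he
  lt_one := by
    rw [← map_one (germValuationSubring U v).valuation, ← Germ.coe_one]
    refine (germValuation_lt_iff (f := fun _ => i π) v).2 (Eventually.of_forall fun x => ?_)
    simpa using hK.lt_one
  pow_iff n a := by
    refine (Germ.exists_pow_eq_coe_iff (f := fun _ => i a)).trans ?_
    rw [eventually_const]
    exact hK.pow_iff n a
  pos := hK.pos
  ne_zero := hK.ne_zero

end Ultrapower

namespace IsHenselianValuation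

variable {k L Γ : Type*} [Field k] [Field L] [LinearOrderedCommGroupWithZero Γ]
    {i : k →+* L} {v : Valuation L Γ} {π : k} {q : ℕ}

theorem le_of_lt_one (hL : IsHenselianValuation i v π) (hv : ∀ x ≠ 0, ∃ m : ℤ, v x = v (i π) ^ m)
    {x : L} (hx : v x < 1) : v x ≤ v (i π) := by
  by_cases hx0 : x = 0
  · simp [hx0]
  obtain ⟨m, hm⟩ := hv x hx0
  have hp := zero_lt_iff.2 hL.pi_ne_zero
  have h1 : 1 ≤ m := by
    by_contra h
    rw [hm, ← zpow_zero (v (i π)), zpow_lt_zpow_iff_right_of_lt_one₀ hp hL.lt_one] at hx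
    omega
  rw [hm]
  calc v (i π) ^ m ≤ v (i π) ^ (1 : ℤ) := (zpow_le_zpow_iff_right_of_lt_one₀ hp hL.lt_one).2 h1
    _ = v (i π) := zpow_one _

theorem le_one_iff (hL : IsHenselianValuation i v π) (hv : ∀ x ≠ 0, ∃ m : ℤ, v x = v (i π) ^ m)
    (hq : 2 ≤ q) (hvq : v (q : L) = 1) (x : L) : v x ≤ 1 ↔ ∃ y, y ^ q = 1 + i π * x ^ q := by
  have hp := zero_lt_iff.2 hL.pi_ne_zero
  have key : ∀ y, v y < 1 → v y ^ q < v (i π) := fun y hy => by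
    calc v y ^ q ≤ v (i π) ^ q := pow_le_pow_left' (hL.le_of_lt_one hv hy) q
      _ < v (i π) ^ 1 := hL.pi_pow_lt (by omega)
      _ = v (i π) := pow_one _
  constructor
  · intro hx
    obtain ⟨y, -, hy⟩ := hL.exists_eq_pow_of_le (n := q) (e := 0) (u := 1 + i π * x ^ q) (by omega)
      (by simp [hvq]) (by
        rw [add_sub_cancel_left, map_mul, map_pow]
        simpa using mul_le_of_le_one_right' (pow_le_one' hx q))
    exact ⟨y, hy⟩
  · rintro ⟨y, hy⟩
    by_contra! hx
    have hx0 : 0 < v x := zero_lt_one.trans hx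
    have hxn : x ≠ 0 := v.ne_zero_iff.1 hx0.ne'
    have h1 : v 1 < v (i π * x ^ q) := by
      have := key x⁻¹ (by rw [map_inv₀]; exact inv_lt_one_of_one_lt₀ hx)
      rw [map_inv₀, inv_pow, inv_lt_iff_one_lt_mul₀ (pow_pos hx0 q)] at this
      rw [map_one, map_mul, map_pow]
      exact this
    have h2 : v (y / x) ^ q = v (i π) := by
      rw [map_div₀, div_pow, ← map_pow v y, hy, Valuation.map_add_eq_of_lt_right v h1, map_mul,
        map_pow]
      exact mul_div_cancel_right₀ _ (pow_pos hx0 q).ne'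
    refine (key (y / x) ?_).ne h2
    by_contra! h3
    exact absurd hL.lt_one (not_lt.2 (h2 ▸ one_le_pow₀ h3))

theorem exists_finset_coset [CharZero k] (hL : IsHenselianValuation i v π)
    (hv : ∀ x ≠ 0, ∃ m : ℤ, v x = v (i π) ^ m)
    (happ : ∀ N : ℕ, ∃ S : Finset k, ∀ u, v u ≤ 1 → ∃ r ∈ S, v (u - i r) ≤ v (i π) ^ N)
    {n : ℕ} (hn : 0 < n) :
    ∃ S : Finset k, 0 ∉ S ∧ ∀ x, x ≠ 0 → ∃ a ∈ S, ∃ y, x = i a * y ^ n := by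
  classical
  obtain ⟨N, hN⟩ := hL.exists_eq_mul_pow hn
  obtain ⟨S, hS⟩ := happ (n + N)
  refine ⟨S.erase 0, by simp, fun x hx => ?_⟩
  obtain ⟨m, hm⟩ := hv x hx
  have hp := hL.pi_ne_zero
  have hip : i π ≠ 0 := v.ne_zero_iff.1 hp
  obtain ⟨r, hr⟩ := Int.eq_ofNat_of_zero_le (Int.emod_nonneg m (by omega : (n : ℤ) ≠ 0))
  have hrn : r < n := by
    have := Int.emod_lt_of_pos m (by omega : (0 : ℤ) < n)
    omega
  have hb : v (x * (i π ^ (m / n))⁻¹ ^ n) = v (i π) ^ r := by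
    rw [map_mul, map_pow, map_inv₀, map_zpow₀, hm, ← zpow_natCast, ← zpow_neg, ← zpow_mul,
      ← zpow_add₀ hp, ← zpow_natCast, ← hr]
    congr 1
    have := Int.emod_add_mul_ediv m n
    linarith
  set b := x * (i π ^ (m / n))⁻¹ ^ n with hb_def
  obtain ⟨a, haS, ha⟩ := hS b (hb ▸ hL.pi_pow_le_one r)
  have h1 : v (b - i a) < v b := ha.trans_lt (hb ▸ hL.pi_pow_lt (by omega))
  have h2 : v (i a) = v b := by simpa using Valuation.map_sub_eq_of_lt_left v h1
  have ha0 : a ≠ 0 := by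
    rintro rfl
    rw [map_zero, map_zero, hb] at h2
    exact (hL.pi_pow_pos r).ne h2
  obtain ⟨y, -, hy⟩ := hN b (i a) (by
    rw [h2, hb]
    exact ha.trans (by rw [pow_add]; gcongr 1; exact hL.pi_pow_le hrn.le))
  refine ⟨a, Finset.mem_erase.2 ⟨ha0, haS⟩, y * i π ^ (m / n), ?_⟩
  rw [mul_pow, ← mul_assoc, ← hy, hb_def, mul_assoc, ← mul_pow,
    inv_mul_cancel₀ (zpow_ne_zero _ hip), one_pow, mul_one]

end IsHenselianValuation

/-- A form of Hensel's lemma in a complete ultrametric field. -/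
theorem exists_eval_eq_zero_of_coeff_lt_one {K : Type*} [NormedField K] [IsUltrametricDist K]
    [CompleteSpace K] (h : K[X]) (h0 : h.coeff 0 = 1) (h1 : h.coeff 1 = 1)
    (hj : ∀ j, 2 ≤ j → ‖h.coeff j‖ < 1) : ∃ z, h.eval z = 0 ∧ ‖z‖ ≤ 1 := by
  set v := NormedField.valuation (K := K)
  set Q : K[X] := X - h + 1 with hQ
  have hQ0 : Q.coeff 0 = 0 := by simp [hQ, h0]
  have hQj : ∀ j, v (Q.coeff j) < 1 := by
    intro j
    match j with
    | 0 => simp [hQ0]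
    | 1 => simp [hQ, h1, coeff_one]
    | j + 2 =>
      have : Q.coeff (j + 2) = - h.coeff (j + 2) := by simp [hQ, coeff_X, coeff_one]
      rw [this, Valuation.map_neg]
      exact_mod_cast hj (j + 2) (by omega)
  obtain ⟨c, hc1, hc⟩ : ∃ c < 1, ∀ j, v (Q.coeff j) ≤ c := by
    refine ⟨Q.support.sup fun j => v (Q.coeff j),
      (Finset.sup_lt_iff (by simp)).2 fun j _ => hQj j, fun j => ?_⟩
    by_cases hjs : j ∈ Q.support
    · exact Finset.le_sup (f := fun j => v (Q.coeff j)) hjs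
    · simp [notMem_support_iff.1 hjs]
  have hlip : ∀ x y, v x ≤ 1 → v y ≤ 1 → v (Q.eval x - Q.eval y) ≤ c * v (x - y) := by
    intro x y hx hy
    refine valuation_eval_sub_eval_le v (ρ := 1) (fun j _ => ?_) (by rw [one_mul]) ?_
    · exact valuation_taylor_coeff_le v (fun j => by simpa using hc j) hy j
    · exact (v.map_sub _ _).trans (max_le hx hy)
  set s := Metric.closedBall (0 : K) 1
  have hs : ∀ {x}, x ∈ s ↔ v x ≤ 1 := fun {x} => by
    rw [mem_closedBall_zero_iff]; exact_mod_cast Iff.rfl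
  have hmaps : Set.MapsTo (fun z => Q.eval z - 1) s s := fun z hz => by
    rw [hs] at hz ⊢
    refine (v.map_sub _ _).trans (max_le ?_ (by simp))
    have := hlip z 0 hz (by simp)
    rw [← coeff_zero_eq_eval_zero, hQ0, sub_zero, sub_zero] at this
    exact this.trans (mul_le_one' hc1.le hz)
  obtain ⟨z, hz, hfix, -⟩ := ContractingWith.exists_fixedPoint' (K := c) (s := s)
    Metric.isClosed_closedBall.isComplete hmaps ⟨hc1, LipschitzWith.of_dist_le_mul fun x y => by
      have := hlip x y (hs.1 x.2) (hs.1 y.2)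
      rw [Subtype.dist_eq, Subtype.dist_eq, dist_eq_norm, dist_eq_norm]
      simp only [Set.MapsTo.val_restrict_apply, sub_sub_sub_cancel_right]
      exact_mod_cast this⟩ (x := 0) (by simp [s]) (edist_ne_top _ _)
  refine ⟨z, ?_, by simpa [s] using hz⟩
  have : Q.eval z - 1 = z := hfix
  simpa [hQ] using this

section Completion

variable {k : Type*} [Field k] [NumberField k]
  (v : HeightOneSpectrum (NumberField.RingOfIntegers k))

local notation "𝕍" => (Valued.v : Valuation (v.adicCompletion k) _)

theorem norm_lt_norm_iff (x y : v.adicCompletion k) :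
    ‖x‖ < ‖y‖ ↔ Valued.v x < Valued.v y := by
  rw [NumberField.FinitePlace.norm_def, NumberField.FinitePlace.norm_def, NNReal.coe_lt_coe]
  exact (WithZeroMulInt.toNNReal_strictMono
    (NumberField.HeightOneSpectrum.one_lt_absNorm_nnreal v)).lt_iff_lt

theorem valued_algebraMap (a : k) :
    Valued.v (algebraMap k (v.adicCompletion k) a) = v.valuation k a :=
  v.valuedAdicCompletion_eq_valuation' a

theorem isHenselianValuation_adicCompletion {π : k} (hπ : v.valuation k π = WithZero.exp (-1)) :
    IsHenselianValuation (algebraMap k (v.adicCompletion k)) 𝕍 π where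
  hensel h h0 h1 hj := by
    have hn : ∀ x : v.adicCompletion k, ‖x‖ < 1 ↔ Valued.v x < 1 := fun x => by
      rw [← norm_one (α := v.adicCompletion k), norm_lt_norm_iff, map_one]
    obtain ⟨z, hz, hz1⟩ := exists_eval_eq_zero_of_coeff_lt_one h h0 h1
      fun j h2 => (hn _).2 (hj j h2)
    refine ⟨z, hz, ?_⟩
    rw [← map_one 𝕍, ← not_lt, ← norm_lt_norm_iff, not_lt, norm_one]
    exact hz1
  exists_pow_le a ha := by
    rw [valued_algebraMap, valued_algebraMap, hπ]
    have := (v.valuation k).ne_zero_iff.2 ha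
    rw [← WithZero.exp_log this]
    refine ⟨(-(v.valuation k a).log).toNat, ?_⟩
    rw [← WithZero.exp_nsmul, WithZero.exp_le_exp]
    simp
    omega
  lt_one := by
    rw [valued_algebraMap, hπ, ← WithZero.exp_zero, WithZero.exp_lt_exp]
    norm_num
  ne_zero := by
    rintro rfl
    rw [map_zero] at hπ
    exact WithZero.exp_ne_zero hπ.symm

theorem exists_valued_eq_zpow {π : k} (hπ : v.valuation k π = WithZero.exp (-1))
    (x : v.adicCompletion k) (hx : x ≠ 0) :
    ∃ m : ℤ, Valued.v x = Valued.v (algebraMap k (v.adicCompletion k) π) ^ m := by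
  rw [valued_algebraMap, hπ]
  have := (𝕍).ne_zero_iff.2 hx
  refine ⟨-(Valued.v x).log, ?_⟩
  rw [← WithZero.exp_zsmul]
  simp [WithZero.exp_log this]

theorem exists_finset_approx {π : k} (hπ : v.valuation k π = WithZero.exp (-1)) (N : ℕ) :
    ∃ S : Finset k, ∀ u : v.adicCompletion k, Valued.v u ≤ 1 →
      ∃ r ∈ S, Valued.v (u - algebraMap k _ r) ≤
        Valued.v (algebraMap k (v.adicCompletion k) π) ^ N := by
  classical
  have hfin : Finite (NumberField.RingOfIntegers k ⧸ v.asIdeal ^ N) :=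
    Ideal.finiteQuotientOfFreeOfNeBot _ (pow_ne_zero _ v.ne_bot)
  have := Fintype.ofFinite (NumberField.RingOfIntegers k ⧸ v.asIdeal ^ N)
  refine ⟨Finset.univ.image fun c : NumberField.RingOfIntegers k ⧸ v.asIdeal ^ N =>
    algebraMap _ k (Quotient.out c), fun u hu => ?_⟩
  have hπN : Valued.v (algebraMap k (v.adicCompletion k) π) ^ N = WithZero.exp (-(N : ℤ)) := by
    rw [valued_algebraMap, hπ, ← WithZero.exp_nsmul]; simp
  have hL := isHenselianValuation_adicCompletion v hπ
  have hpos : 0 < ‖algebraMap k (v.adicCompletion k) π ^ N‖ := by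
    simp [hL.ne_zero]
  obtain ⟨r, hr⟩ := (v.denseRange_algebraMap (K := k)).exists_dist_lt u hpos
  rw [dist_eq_norm, norm_lt_norm_iff, map_pow] at hr
  have hr1 : v.valuation k r ≤ 1 := by
    rw [← valued_algebraMap, ← sub_sub_cancel u (algebraMap k _ r)]
    exact (Valuation.map_sub _ _ _).trans (max_le hu (hr.le.trans (hL.pi_pow_le_one N)))
  obtain ⟨a, ha⟩ := v.exists_valuation_sub_lt_of_integer hr1
    (Units.mk0 (WithZero.exp (-(N : ℤ))) WithZero.exp_ne_zero)
  rw [Units.val_mk0] at ha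
  refine ⟨algebraMap _ k (Quotient.out (Ideal.Quotient.mk (v.asIdeal ^ N) a)), 
    Finset.mem_image_of_mem _ (Finset.mem_univ _), ?_⟩
  set b := Quotient.out (Ideal.Quotient.mk (v.asIdeal ^ N) a)
  have hb : v.valuation k (algebraMap _ k a - algebraMap _ k b) ≤ WithZero.exp (-(N : ℤ)) := by
    rw [← map_sub, HeightOneSpectrum.valuation_of_algebraMap,
      HeightOneSpectrum.intValuation_le_pow_iff_mem]
    exact Ideal.Quotient.eq.1 (Quotient.out_eq _).symm
  have e : u - algebraMap k (v.adicCompletion k) (algebraMap _ k b) =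
      (u - algebraMap k _ r) - algebraMap k _ (algebraMap _ k a - r) +
        algebraMap k _ (algebraMap _ k a - algebraMap _ k b) := by
    simp only [map_sub]; ring
  rw [e, hπN]
  refine (Valuation.map_add _ _ _).trans
    (max_le ((Valuation.map_sub _ _ _).trans (max_le ?_ ?_)) ?_)
  · exact hπN ▸ hr.le
  · rw [valued_algebraMap]; exact ha.le
  · rw [valued_algebraMap]; exact hb

theorem isPadicLike_adicCompletion : ∃ (π : k) (q : ℕ),
    IsPadicLike (algebraMap k (v.adicCompletion k)) 𝕍 π q
      (fun n a => ∃ y : v.adicCompletion k, y ^ n = algebraMap k _ a) ∧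
    (∀ N : ℕ, ∃ S : Finset k, ∀ u : v.adicCompletion k, Valued.v u ≤ 1 →
      ∃ r ∈ S, Valued.v (u - algebraMap k _ r) ≤
        Valued.v (algebraMap k (v.adicCompletion k) π) ^ N) ∧
    ∀ n : ℕ, 0 < n → ∃ S : Finset k, 0 ∉ S ∧ ∀ x : v.adicCompletion k, x ≠ 0 →
      ∃ a ∈ S, ∃ y, x = algebraMap k _ a * y ^ n := by
  obtain ⟨π, hπ⟩ := v.valuation_exists_uniformizer k
  have hL := isHenselianValuation_adicCompletion v hπ
  have happ := exists_finset_approx v hπ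
  have hcos := fun n hn => hL.exists_finset_coset (exists_valued_eq_zpow v hπ) happ (n := n) hn
  obtain ⟨q, hq, hvq⟩ : ∃ q : ℕ, 2 ≤ q ∧ Valued.v (q : v.adicCompletion k) = 1 := by
    by_cases h2 : Valued.v ((2 : ℕ) : v.adicCompletion k) = 1
    · exact ⟨2, le_rfl, h2⟩
    · refine ⟨3, by norm_num, ?_⟩
      have h2' := lt_of_le_of_ne (valuation_natCast_le_one 𝕍 2) h2
      rw [← map_one 𝕍] at h2'
      have := Valuation.map_add_eq_of_lt_left _ h2'
      rw [map_one] at this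
      rw [← this]
      congr 1
      norm_num
  refine ⟨π, q, ⟨hL, fun u hu N => ?_, fun n hn x hx => ?_,
    hL.le_one_iff (exists_valued_eq_zpow v hπ) hq hvq, fun n a => Iff.rfl, by omega⟩, happ, hcos⟩
  · obtain ⟨S, hS⟩ := happ N
    obtain ⟨r, -, hr⟩ := hS u hu
    exact ⟨r, hr⟩
  · obtain ⟨S, hS0, hS⟩ := hcos n hn
    obtain ⟨a, ha, h⟩ := hS x hx
    exact ⟨a, fun h0 => hS0 (h0 ▸ ha), h⟩

end Completion

/-- The Boolean algebra of subsets of `K ^ ι` generated by the conditions `f(x) = 0` and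
`f(x) is an n-th power`, for polynomials `f` over `k`. -/
inductive IsPowerDefinable (k : Type*) {K ι : Type*} [Field k] [Field K] [Algebra k K] :
    Set (ι → K) → Prop
  | zero (f : MvPolynomial ι k) : IsPowerDefinable k {x | MvPolynomial.aeval x f = 0}
  | pow (f : MvPolynomial ι k) (n : ℕ) (hn : 0 < n) :
      IsPowerDefinable k {x | ∃ y, y ^ n = MvPolynomial.aeval x f}
  | compl {A : Set (ι → K)} : IsPowerDefinable k A → IsPowerDefinable k Aᶜ
  | inter {A B : Set (ι → K)} :
      IsPowerDefinable k A → IsPowerDefinable k B → IsPowerDefinable k (A ∩ B)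

namespace IsPowerDefinable

variable {k K ι κ : Type*} [Field k] [Field K] [Algebra k K]

theorem univ : IsPowerDefinable k (Set.univ : Set (ι → K)) := by
  simpa using zero (k := k) (K := K) (ι := ι) 0

theorem union {A B : Set (ι → K)} (hA : IsPowerDefinable k A) (hB : IsPowerDefinable k B) :
    IsPowerDefinable k (A ∪ B) := by
  simpa [Set.compl_inter] using (hA.compl.inter hB.compl).compl

theorem preimage_comp {A : Set (κ → K)} (hA : IsPowerDefinable k A) (e : κ → ι) :
    IsPowerDefinable k {x : ι → K | x ∘ e ∈ A} := by
  induction hA with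
  | zero f => simpa [MvPolynomial.aeval_rename] using zero (MvPolynomial.rename e f)
  | pow f n hn => simpa [MvPolynomial.aeval_rename] using pow (MvPolynomial.rename e f) n hn
  | compl _ ih => exact ih.compl
  | inter _ _ ih₁ ih₂ => exact ih₁.inter ih₂

open Filter

/-- Two ultrafilters which are separated by a set, but not by any power-definable set. -/
theorem exists_ultrafilter {B : Set (ι → K)} (hB : ¬ IsPowerDefinable k B) :
    ∃ U V : Ultrafilter (ι → K), B ∈ U ∧ B ∉ V ∧ ∀ S, IsPowerDefinable k S → (S ∈ U ↔ S ∈ V) := by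
  let 𝒮 := {S : Set (ι → K) // IsPowerDefinable k S ∧ S ⊆ B}
  have hne : Nonempty 𝒮 := ⟨⟨∅, by simpa using (univ (k := k) (K := K) (ι := ι)).compl, by simp⟩⟩
  have : (⨅ S : 𝒮, 𝓟 (B \ S.1)).NeBot := by
    refine iInf_neBot_of_directed' ?_ fun S => ?_
    · rintro ⟨S, hS, hSB⟩ ⟨T, hT, hTB⟩
      refine ⟨⟨S ∪ T, hS.union hT, Set.union_subset hSB hTB⟩, ?_, ?_⟩ <;>
        exact principal_mono.2 (Set.sdiff_subset_sdiff_right (by simp))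
    · rw [principal_neBot_iff, Set.sdiff_nonempty]
      exact fun h => hB (S.2.2.antisymm h ▸ S.2.1)
  let U := Ultrafilter.of (⨅ S : 𝒮, 𝓟 (B \ S.1))
  have hU : ∀ S : 𝒮, B \ S.1 ∈ U := fun S =>
    Ultrafilter.of_le _ (mem_iInf_of_mem S (mem_principal_self _))
  let 𝒯 := {S : Set (ι → K) // IsPowerDefinable k S ∧ S ∈ U}
  have hne' : Nonempty 𝒯 := ⟨⟨Set.univ, univ, univ_mem⟩⟩
  have : (⨅ S : 𝒯, 𝓟 (S.1 \ B)).NeBot := by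
    refine iInf_neBot_of_directed' ?_ fun S => ?_
    · rintro ⟨S, hS, hSB⟩ ⟨T, hT, hTB⟩
      refine ⟨⟨S ∩ T, hS.inter hT, inter_mem hSB hTB⟩, ?_, ?_⟩ <;>
        exact principal_mono.2 (Set.sdiff_subset_sdiff_left (by simp))
    · rw [principal_neBot_iff, Set.sdiff_nonempty]
      intro h
      have := inter_mem S.2.2 (hU ⟨S.1, S.2.1, h⟩)
      simp at this
  let V := Ultrafilter.of (⨅ S : 𝒯, 𝓟 (S.1 \ B))
  have hV : ∀ S : 𝒯, S.1 \ B ∈ V := fun S =>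
    Ultrafilter.of_le _ (mem_iInf_of_mem S (mem_principal_self _))
  have hUV : ∀ S, IsPowerDefinable k S → S ∈ U → S ∈ V := fun S hS hSU =>
    mem_of_superset (hV ⟨S, hS, hSU⟩) Set.sdiff_subset
  refine ⟨U, V, mem_of_superset (hU hne.some) Set.sdiff_subset, ?_,
    fun S hS => ⟨hUV S hS, fun h => ?_⟩⟩
  · rw [← Ultrafilter.compl_mem_iff_notMem]
    exact mem_of_superset (hV hne'.some) fun x hx => hx.2
  · by_contra hSU
    rw [← Ultrafilter.compl_mem_iff_notMem] at hSU
    exact Ultrafilter.compl_mem_iff_notMem.1 (hUV _ hS.compl hSU) h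

/-- A polynomial in the variables `Option ι`, as a polynomial in the variable `none`. -/
noncomputable def toPoly (f : MvPolynomial (Option ι) k) : (MvPolynomial ι k)[X] :=
  MvPolynomial.aeval (fun o => o.elim Polynomial.X fun j => Polynomial.C (MvPolynomial.X j)) f

theorem eval_map_toPoly {R : Type*} [CommRing R] [Algebra k R] (f : MvPolynomial (Option ι) k)
    (x : ι → R) (a : R) :
    ((toPoly f).map (MvPolynomial.aeval x).toRingHom).eval a =
      MvPolynomial.aeval (fun o => o.elim a x) f := by
  rw [toPoly]
  induction f using MvPolynomial.induction_on with
  | C c => simp [Polynomial.algebraMap_apply]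
  | add f g hf hg => rw [map_add, Polynomial.map_add, eval_add, hf, hg, map_add]
  | mul_X f o hf =>
    rw [map_mul, Polynomial.map_mul, eval_mul, hf, map_mul]
    cases o <;> simp

/-- The evaluation of polynomials at the generic point of an ultrafilter on affine space. -/
noncomputable def genericEval (k : Type*) [Field k] [Algebra k K] (U : Ultrafilter (ι → K)) :
    MvPolynomial ι k →+* (U : Filter (ι → K)).Germ K :=
  (Germ.coeRingHom _).comp (RingHom.pi fun x => (MvPolynomial.aeval x).toRingHom)

theorem eval_genericEval (U : Ultrafilter (ι → K)) (f : MvPolynomial (Option ι) k)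
    (t : (ι → K) → K) :
    ((toPoly f).map (genericEval k U)).eval (t : (U : Filter (ι → K)).Germ K) =
      ((fun x => MvPolynomial.aeval (fun o => o.elim (t x) x) f : (ι → K) → K) :
        (U : Filter (ι → K)).Germ K) := by
  rw [genericEval, ← Polynomial.map_map]
  refine (eval_map_apply (Germ.coeRingHom (U : Filter (ι → K))) t).trans ?_
  refine congrArg (Germ.coeRingHom (U : Filter (ι → K))) (funext fun x => ?_)
  rw [← eval_map_toPoly]
  refine (eval_map_apply (Pi.evalRingHom (fun _ : ι → K => K) x) _).symm.trans ?_
  rw [Polynomial.map_map]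
  rfl

variable {Γ : Type*} [LinearOrderedCommGroupWithZero Γ] {v : Valuation K Γ} {π : k} {q : ℕ}
  {P : ℕ → k → Prop}

theorem exists_transfer_of_ultrafilter {A : Set (Option ι → K)} (hA : IsPowerDefinable k A)
    {U V : Ultrafilter (ι → K)}
    (hL : IsPadicLike ((Germ.coeRingHom (U : Filter (ι → K))).comp
      (RingHom.pi fun _ => algebraMap k K)) (germValuationSubring U v).valuation π q P)
    (hL' : IsPadicLike ((Germ.coeRingHom (V : Filter (ι → K))).comp
      (RingHom.pi fun _ => algebraMap k K)) (germValuationSubring V v).valuation π q P) :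
    ∃ (G : Finset (MvPolynomial ι k)[X]) (n : ℕ), 0 < n ∧ ∀ t t' : (ι → K) → K,
      (∀ g ∈ G, SameCoset ((Germ.coeRingHom (U : Filter (ι → K))).comp
        (RingHom.pi fun _ => algebraMap k K)) ((Germ.coeRingHom (V : Filter (ι → K))).comp
        (RingHom.pi fun _ => algebraMap k K)) n
        ((g.map (genericEval k U)).eval (t : (U : Filter (ι → K)).Germ K))
        ((g.map (genericEval k V)).eval (t' : (V : Filter (ι → K)).Germ K))) →
      ((∀ᶠ x in U, (fun o => o.elim (t x) x) ∈ A) ↔ ∀ᶠ x in V, (fun o => o.elim (t' x) x) ∈ A) := by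
  classical
  induction hA with
  | zero f =>
    refine ⟨{toPoly f}, 1, one_pos, fun t t' h => ?_⟩
    have := (h _ (Finset.mem_singleton_self _)).eq_zero_iff
    rw [eval_genericEval, eval_genericEval] at this
    exact Germ.coe_eq.symm.trans (this.trans Germ.coe_eq)
  | pow f n hn =>
    refine ⟨{toPoly f}, n, hn, fun t t' h => ?_⟩
    have := hL.exists_pow_eq_iff hL' (h _ (Finset.mem_singleton_self _))
    rw [eval_genericEval, eval_genericEval] at this
    exact Germ.exists_pow_eq_coe_iff.symm.trans (this.trans Germ.exists_pow_eq_coe_iff)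
  | compl _ ih =>
    obtain ⟨G, n, hn, h⟩ := ih
    refine ⟨G, n, hn, fun t t' ht => ?_⟩
    simp only [Set.mem_compl_iff, Ultrafilter.eventually_not]
    rw [h t t' ht]
  | inter _ _ ih₁ ih₂ =>
    obtain ⟨G, n, hn, h⟩ := ih₁
    obtain ⟨G', n', hn', h'⟩ := ih₂
    refine ⟨G ∪ G', n * n', Nat.mul_pos hn hn', fun t t' ht => ?_⟩
    simp only [Set.mem_inter_iff, eventually_and]
    rw [h t t' fun g hg => (ht g (Finset.mem_union_left _ hg)).of_dvd (dvd_mul_right _ _),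
      h' t t' fun g hg => (ht g (Finset.mem_union_right _ hg)).of_dvd (dvd_mul_left _ _)]

/-- Macintyre's theorem: power-definable sets are closed under projection. -/
theorem proj [CharZero k] (hK : IsPadicLike (algebraMap k K) v π q P)
    (happ : ∀ N : ℕ, ∃ S : Finset k, ∀ u, v u ≤ 1 →
      ∃ r ∈ S, v (u - algebraMap k K r) ≤ v (algebraMap k K π) ^ N)
    (hcos : ∀ n : ℕ, 0 < n → ∃ S : Finset k, 0 ∉ S ∧ ∀ x, x ≠ 0 →
      ∃ a ∈ S, ∃ y, x = algebraMap k K a * y ^ n)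
    {A : Set (Option ι → K)} (hA : IsPowerDefinable k A) :
    IsPowerDefinable k {x : ι → K | ∃ a, (fun o => o.elim a x) ∈ A} := by
  by_contra hB
  obtain ⟨U, V, hU, hV, hUV⟩ := exists_ultrafilter hB
  have hL := hK.germ (U := U) happ hcos
  have hL' := hK.germ (U := V) happ hcos
  have hC : ∀ W : Ultrafilter (ι → K), (genericEval k W).comp MvPolynomial.C =
      (Germ.coeRingHom (W : Filter (ι → K))).comp (RingHom.pi fun _ => algebraMap k K) := by
    intro W
    ext c
    simp only [genericEval, RingHom.comp_apply]
    congr 1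
    funext x
    simp
  have hzero : ∀ r, genericEval k U r = 0 ↔ genericEval k V r = 0 := fun r =>
    Germ.coe_eq.trans ((hUV _ (zero r)).trans Germ.coe_eq.symm)
  have hpow : ∀ n, 0 < n → ∀ r, (∃ y, y ^ n = genericEval k U r) ↔ ∃ y, y ^ n = genericEval k V r :=
    fun n hn r => Germ.exists_pow_eq_coe_iff.trans
      ((hUV _ (pow r n hn)).trans Germ.exists_pow_eq_coe_iff.symm)
  have hφ : ∀ n, 0 < n → ∀ r, SameCoset
      ((Germ.coeRingHom (U : Filter (ι → K))).comp (RingHom.pi fun _ => algebraMap k K))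
      ((Germ.coeRingHom (V : Filter (ι → K))).comp (RingHom.pi fun _ => algebraMap k K)) n
      (genericEval k U r) (genericEval k V r) := by
    intro n hn r
    by_cases hr : genericEval k U r = 0
    · rw [hr, (hzero r).1 hr]
      simpa using SameCoset.map
        (i := (Germ.coeRingHom (U : Filter (ι → K))).comp (RingHom.pi fun _ => algebraMap k K))
        (i' := (Germ.coeRingHom (V : Filter (ι → K))).comp (RingHom.pi fun _ => algebraMap k K))
        (n := n) (0 : k)
    · obtain ⟨a, ha, y, hy⟩ := hL.coset n hn _ hr
      have hr' : genericEval k V r ≠ 0 := fun h => hr ((hzero r).2 h)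
      have hy0 : y ≠ 0 := by
        rintro rfl
        rw [zero_pow hn.ne', mul_zero] at hy
        exact hr hy
      have hc : ∀ W : Ultrafilter (ι → K), genericEval k W (MvPolynomial.C a⁻¹ * r) =
          ((Germ.coeRingHom (W : Filter (ι → K))).comp (RingHom.pi fun _ => algebraMap k K) a)⁻¹ *
            genericEval k W r := by
        intro W
        rw [map_mul, ← map_inv₀, ← hC]
        rfl
      obtain ⟨y', hy'⟩ := (hpow n hn (MvPolynomial.C a⁻¹ * r)).1 ⟨y, by
        rw [hc, hy, inv_mul_cancel_left₀]
        exact (_root_.map_ne_zero _).2 ha⟩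
      rw [hc] at hy'
      have hy2 : genericEval k V r = ((Germ.coeRingHom (V : Filter (ι → K))).comp
          (RingHom.pi fun _ => algebraMap k K) a) * y' ^ n := by
        rw [hy', mul_inv_cancel_left₀]
        exact (_root_.map_ne_zero _).2 ha
      refine ⟨a, y, y', hy0, ?_, hy, hy2⟩
      rintro rfl
      rw [zero_pow hn.ne', mul_zero] at hy2
      exact hr' hy2
  obtain ⟨G, n, hn, hG⟩ := exists_transfer_of_ultrafilter hA hL hL'
  choose! t ht using fun x (hx : ∃ a, (fun o => o.elim a x) ∈ A) => hx
  obtain ⟨t', ht'⟩ := hL.exists_transfer hL' _ _ MvPolynomial.C (hC U) (hC V) hφ G hn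
    (t : (U : Filter (ι → K)).Germ K)
  induction t' using Germ.inductionOn with | h t' => ?_
  have h1 : ∀ᶠ x in U, (fun o => o.elim (t x) x) ∈ A := by
    filter_upwards [hU] with x hx using ht x hx
  have h2 := (hG t t' ht').1 h1
  exact hV (by filter_upwards [h2] with x hx using ⟨_, hx⟩)

end IsPowerDefinable

section ModelTheory

universe w

variable {k K : Type*} [Field k] [Field K] [Algebra k K] [Ring.CompatibleRing K]

theorem exists_realize_eq_aeval {α : Type*}
    (t : (Language.ring[[Set.range (algebraMap k K)]]).Term α) :
    ∃ p : MvPolynomial α k, ∀ x : α → K, t.realize x = MvPolynomial.aeval x p := by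
  induction t with
  | var a => exact ⟨MvPolynomial.X a, fun x => by simp⟩
  | @func l f ts ih =>
    choose p hp using ih
    rcases f with f | c
    · cases f with
      | add =>
        refine ⟨p 0 + p 1, fun x => ?_⟩
        exact (Ring.CompatibleRing.funMap_add fun i => (ts i).realize x).trans (by simp [hp])
      | mul =>
        refine ⟨p 0 * p 1, fun x => ?_⟩
        exact (Ring.CompatibleRing.funMap_mul fun i => (ts i).realize x).trans (by simp [hp])
      | neg =>
        refine ⟨-p 0, fun x => ?_⟩
        exact (Ring.CompatibleRing.funMap_neg fun i => (ts i).realize x).trans (by simp [hp])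
      | zero =>
        refine ⟨0, fun x => ?_⟩
        exact (Ring.CompatibleRing.funMap_zero fun i => (ts i).realize x).trans (by simp)
      | one =>
        refine ⟨1, fun x => ?_⟩
        exact (Ring.CompatibleRing.funMap_one fun i => (ts i).realize x).trans (by simp)
    · match l, c with
      | 0, ⟨_, c, rfl⟩ => exact ⟨MvPolynomial.C c, fun x => by simp; rfl⟩
      | _ + 1, c => exact isEmptyElim c

/-- If power-definable sets are closed under projection, then every definable set is
power-definable. -/
theorem isPowerDefinable_realize
    (hproj : ∀ {ι : Type w} {A : Set (Option ι → K)}, IsPowerDefinable k A →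
      IsPowerDefinable k {x : ι → K | ∃ a, (fun o => o.elim a x) ∈ A})
    {α : Type w} {m : ℕ} (φ : (Language.ring[[Set.range (algebraMap k K)]]).BoundedFormula α m) :
    IsPowerDefinable k {x : α ⊕ Fin m → K | φ.Realize (x ∘ Sum.inl) (x ∘ Sum.inr)} := by
  induction φ with
  | falsum => simpa [Language.BoundedFormula.Realize] using IsPowerDefinable.univ.compl
  | equal t₁ t₂ =>
    obtain ⟨p, hp⟩ := exists_realize_eq_aeval t₁
    obtain ⟨q, hq⟩ := exists_realize_eq_aeval t₂
    simpa [Language.BoundedFormula.Realize, hp, hq, sub_eq_zero] using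
      IsPowerDefinable.zero (K := K) (p - q)
  | rel R => rcases R with R | R <;> exact isEmptyElim R
  | imp φ ψ ih₁ ih₂ =>
    convert ih₁.compl.union ih₂ using 1
    ext x
    simp [imp_iff_not_or]
  | @all m φ ih =>
    let e : α ⊕ Fin (m + 1) → Option (α ⊕ Fin m) :=
      Sum.elim (fun a => some (Sum.inl a)) (Fin.snoc (fun i => some (Sum.inr i)) none)
    convert (hproj (ih.compl.preimage_comp e)).compl using 1
    ext x
    have he : ∀ a, ((fun o : Option (α ⊕ Fin m) => o.elim a x) ∘ e) ∘ Sum.inr =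
        Fin.snoc (x ∘ Sum.inr) a := by
      intro a
      funext i
      refine Fin.lastCases ?_ (fun i => ?_) i <;> simp [e]
    simp only [Set.mem_ofPred_eq, Set.mem_compl_iff, not_exists, not_not, he,
      Language.BoundedFormula.realize_all]
    rfl

theorem Set.Definable.isPowerDefinable
    (hproj : ∀ {ι : Type w} {A : Set (Option ι → K)}, IsPowerDefinable k A →
      IsPowerDefinable k {x : ι → K | ∃ a, (fun o => o.elim a x) ∈ A})
    {α : Type w} {A : Set (α → K)}
    (hA : (Set.range (algebraMap k K)).Definable Language.ring A) : IsPowerDefinable k A := by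
  obtain ⟨φ, rfl⟩ := hA
  convert (isPowerDefinable_realize hproj φ).preimage_comp (Sum.elim id Fin.elim0) using 1
  ext x
  exact iff_of_eq (congrArg (Language.BoundedFormula.Realize φ x) (Subsingleton.elim _ _))

end ModelTheory

/-- The sets which are finite unions of finite intersections of members of `𝒮`. -/
def IsFiniteUnionInter {X : Type*} (𝒮 : Set (Set X)) (A : Set X) : Prop :=
  ∃ F : Finset (Finset (Set X)), (∀ G ∈ F, ∀ B ∈ G, B ∈ 𝒮) ∧ A = ⋃ G ∈ F, ⋂ B ∈ G, B

namespace IsFiniteUnionInter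

variable {X : Type*} {𝒮 : Set (Set X)} {A B : Set X}

theorem of_mem (h : A ∈ 𝒮) : IsFiniteUnionInter 𝒮 A :=
  ⟨{{A}}, by simpa, by simp⟩

theorem empty : IsFiniteUnionInter 𝒮 (∅ : Set X) :=
  ⟨∅, by simp, by simp⟩

theorem union (hA : IsFiniteUnionInter 𝒮 A) (hB : IsFiniteUnionInter 𝒮 B) :
    IsFiniteUnionInter 𝒮 (A ∪ B) := by
  classical
  obtain ⟨F, hF, rfl⟩ := hA
  obtain ⟨F', hF', rfl⟩ := hB
  refine ⟨F ∪ F', fun G hG => (Finset.mem_union.1 hG).elim (hF G) (hF' G), ?_⟩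
  rw [Finset.set_biUnion_union]

theorem biUnion {ι : Type*} (S : Finset ι) {A : ι → Set X}
    (hA : ∀ i ∈ S, IsFiniteUnionInter 𝒮 (A i)) : IsFiniteUnionInter 𝒮 (⋃ i ∈ S, A i) := by
  classical
  induction S using Finset.induction_on with
  | empty => simpa using empty
  | insert a S _ ih =>
    rw [Finset.set_biUnion_insert]
    exact (hA a (Finset.mem_insert_self _ _)).union
      (ih fun i hi => hA i (Finset.mem_insert_of_mem hi))

theorem inter (hA : IsFiniteUnionInter 𝒮 A) (hB : IsFiniteUnionInter 𝒮 B) :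
    IsFiniteUnionInter 𝒮 (A ∩ B) := by
  classical
  obtain ⟨F, hF, rfl⟩ := hA
  obtain ⟨F', hF', rfl⟩ := hB
  rw [Set.iUnion₂_inter]
  refine biUnion F fun G hG => ?_
  rw [Set.inter_iUnion₂]
  refine biUnion F' fun G' hG' => ⟨{G ∪ G'}, ?_, ?_⟩
  · simp only [Finset.mem_singleton, forall_eq]
    exact fun B hB => (Finset.mem_union.1 hB).elim (hF G hG B) (hF' G' hG' B)
  · rw [Finset.set_biUnion_singleton, Finset.set_biInter_inter]

theorem exists_fin (hA : IsFiniteUnionInter 𝒮 A) :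
    ∃ (r : ℕ) (t : Fin r → ℕ) (B : (i : Fin r) → Fin (t i) → Set X),
      (∀ i j, B i j ∈ 𝒮) ∧ A = ⋃ i, ⋂ j, B i j := by
  obtain ⟨F, hF, rfl⟩ := hA
  refine ⟨F.card, fun i => (F.equivFin.symm i).1.card,
    fun i j => ((F.equivFin.symm i).1.equivFin.symm j).1,
    fun i j => hF _ (F.equivFin.symm i).2 _ (Subtype.property _), ?_⟩
  rw [F.equivFin.symm.surjective.iUnion_comp fun G => ⋂ j, (G.1.equivFin.symm j).1]
  refine (Set.biUnion_eq_iUnion (F : Set (Finset (Set X))) _).trans ?_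
  refine Set.iUnion_congr fun G => ?_
  rw [G.1.equivFin.symm.surjective.iInter_comp fun B => B.1]
  exact Set.biInter_eq_iInter (G.1 : Set (Set X)) _

end IsFiniteUnionInter

/-- A power-definable set is a finite union of finite intersections of conditions
`f(x) = 0` and `f(x) ∈ K^{×m}`. -/
theorem IsPowerDefinable.isFiniteUnionInter {k K ι : Type*} [Field k] [Field K] [Algebra k K]
    (hcos : ∀ n : ℕ, 0 < n → ∃ S : Finset k, 0 ∉ S ∧ ∀ x : K, x ≠ 0 →
      ∃ a ∈ S, ∃ y, x = algebraMap k K a * y ^ n)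
    {𝒮 : Set (Set (ι → K))} (hzero : ∀ f : MvPolynomial ι k, {x | MvPolynomial.aeval x f = 0} ∈ 𝒮)
    (hpow : ∀ (f : MvPolynomial ι k) (m : ℕ), 0 < m →
      {x | ∃ b : K, b ≠ 0 ∧ b ^ m = MvPolynomial.aeval x f} ∈ 𝒮)
    {A : Set (ι → K)} (hA : IsPowerDefinable k A) :
    IsFiniteUnionInter 𝒮 A ∧ IsFiniteUnionInter 𝒮 Aᶜ := by
  classical
  induction hA with
  | zero f =>
    refine ⟨.of_mem (hzero f), ?_⟩
    convert IsFiniteUnionInter.of_mem (hpow f 1 one_pos) using 1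
    ext x
    simp
  | pow f m hm =>
    obtain ⟨S, hS0, hS⟩ := hcos m hm
    constructor
    · convert (IsFiniteUnionInter.of_mem (hzero f)).union (.of_mem (hpow f m hm)) using 1
      ext x
      constructor
      · rintro ⟨y, hy⟩
        rcases eq_or_ne y 0 with rfl | hy0
        · exact .inl (by simpa [hm.ne'] using hy.symm)
        · exact .inr ⟨y, hy0, hy⟩
      · rintro (h | ⟨y, -, hy⟩)
        · exact ⟨0, by rw [zero_pow hm.ne', h]⟩
        · exact ⟨y, hy⟩
    · convert IsFiniteUnionInter.biUnion {a ∈ S | ¬ ∃ z, z ^ m = algebraMap k K a}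
        fun a _ => .of_mem (hpow (MvPolynomial.C a⁻¹ * f) m hm) using 1
      ext x
      simp only [Set.mem_compl_iff, Set.mem_ofPred_eq, Set.mem_iUnion, Finset.mem_filter, map_mul,
        MvPolynomial.aeval_C, map_inv₀, exists_prop]
      constructor
      · intro h
        have h0 : MvPolynomial.aeval x f ≠ 0 := fun h0 => h ⟨0, by rw [zero_pow hm.ne', h0]⟩
        obtain ⟨a, ha, y, hy⟩ := hS _ h0
        have ha0 : algebraMap k K a ≠ 0 := by
          rintro h
          rw [h, zero_mul] at hy
          exact h0 hy
        refine ⟨a, ⟨ha, ?_⟩, y, ?_, by rw [hy, inv_mul_cancel_left₀ ha0]⟩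
        · rintro ⟨z, hz⟩
          exact h ⟨z * y, by rw [mul_pow, hz, hy]⟩
        · rintro rfl
          rw [zero_pow hm.ne', mul_zero] at hy
          exact h0 hy
      · rintro ⟨a, ⟨ha, hna⟩, y, hy0, hy⟩ ⟨z, hz⟩
        have ha0 : algebraMap k K a ≠ 0 := by
          rw [Ne, map_eq_zero]
          rintro rfl
          exact hS0 ha
        refine hna ⟨z / y, ?_⟩
        rw [div_pow, hy, hz, div_eq_iff (by rw [← hy]; exact pow_ne_zero _ hy0),
          mul_inv_cancel_left₀ ha0]
  | compl _ ih => exact ⟨ih.2, by simpa using ih.1⟩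
  | inter _ _ ih₁ ih₂ =>
    exact ⟨ih₁.1.inter ih₂.1, by rw [Set.compl_inter]; exact ih₁.2.union ih₂.2⟩

/-- Every `k`-definable subset of `k_v^n` is a finite union of finite intersections of
simple subsets. -/
theorem definable_eq_union_inter_simple (k : Type*) [Field k] [NumberField k]
    (v : HeightOneSpectrum (NumberField.RingOfIntegers k)) (n : ℕ)
    (A : Set (Fin n → v.adicCompletion k))
    (hA : @Set.Definable _ (Set.range (algebraMap k (v.adicCompletion k))) Language.ring
      (Ring.compatibleRingOfRing (v.adicCompletion k)).toStructure _ A) :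
    ∃ (r : ℕ) (t : Fin r → ℕ) (B : (i : Fin r) → Fin (t i) → Set (Fin n → v.adicCompletion k)),
      (∀ i j, IsSimpleSubset k v n (B i j)) ∧ A = ⋃ i, ⋂ j, B i j := by
  obtain ⟨π, q, hK, happ, hcos⟩ := isPadicLike_adicCompletion v
  let := Ring.compatibleRingOfRing (v.adicCompletion k)
  have hA' : IsPowerDefinable k A := Set.Definable.isPowerDefinable
    (fun hB => hB.proj hK happ hcos) hA
  exact (hA'.isFiniteUnionInter hcos (𝒮 := {B | IsSimpleSubset k v n B})
    (fun f => .inl ⟨f, rfl⟩) fun f m hm => .inr ⟨f, m, hm, rfl⟩).1.exists_fin
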